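/- arXiv:2405.09917 — 2 statements merged into one kernel-verified Lean document; each statement's English description precedes it below -/
import Mathlib

section
/- There is a dense G_δ subset of C_λ (in the uniform topology) such that every map f in this subset is of nonmonotonic type, i.e., f is not of monotonic type at any point of I. -/
open MeasureTheory Set
open scoped ENNReal

/-- `C_λ`: continuous maps of `[0,1]` preserving Lebesgue measure, with the uniform metric. -/
abbrev CLam : Type := {f : C(unitInterval, unitInterval) // MeasurePreserving f volume volume}

/-- `g` is non-decreasing at `x`: for some `δ > 0`, `g(t) ≤ g(x)` for
`t ∈ I ∩ (x−δ, x)` and `g(t) ≥ g(x)` for `t ∈ I ∩ (x, x+δ)`. -/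
def NonDecreasingAt (g : unitInterval → ℝ) (x : unitInterval) : Prop :=
  ∃ δ : ℝ, 0 < δ ∧
    (∀ t : unitInterval, (x : ℝ) - δ < (t : ℝ) → (t : ℝ) < (x : ℝ) → g t ≤ g x) ∧
    (∀ t : unitInterval, (x : ℝ) < (t : ℝ) → (t : ℝ) < (x : ℝ) + δ → g x ≤ g t)

/-- `g` is monotone at `x`: `g` or `−g` is non-decreasing at `x`. -/
def MonotoneAtPt (g : unitInterval → ℝ) (x : unitInterval) : Prop :=
  NonDecreasingAt g x ∨ NonDecreasingAt (fun t => -(g t)) x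

/-- `g` is of monotonic type at `x`: for some `γ ∈ ℝ` the function
`g_{−γ} : t ↦ g(t) − γ t` is monotone at `x`. -/
def MonotonicTypeAt (g : unitInterval → ℝ) (x : unitInterval) : Prop :=
  ∃ γ : ℝ, MonotoneAtPt (fun t => g t - γ * (t : ℝ)) x

/-- `g` is of nonmonotonic type: it is not of monotonic type at any point of `[0,1]`. -/
def NonmonotonicType (g : unitInterval → ℝ) : Prop :=
  ∀ x : unitInterval, ¬ MonotonicTypeAt g x

/-! The set is the intersection over `n` of the maps at each of whose points some chord has slope
greater than `n` and some chord has slope less than `-n`. Since a member of `C_λ` is bounded, chords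
of large slope are short, so such a map stays nonmonotone at every point after any linear function
is subtracted. By compactness of `[0,1]` each of these sets is open, and since `C_λ` is complete,
Baire's theorem reduces everything to their density.

Given `f`, compose it with `Z = Z₁ ∘ Z₂`, where `Z₁` and `Z₂` are measure preserving zigzags on the
grids of mesh `1 / N` and `1 / (N + 1)`, each mapping every cell of its grid onto itself many times.
Such a `Z` is `2 / N`-close to the identity however rapidly `Z₂` oscillates. Near any interior point
the map `Z₂` covers a cell of the fine grid immediately to the left and another one immediately to
the right, equal or adjacent; as the grids are staggered, `Z₁` maps both onto one common cell of
mesh `1 / N`. On that cell `f` takes two different values, because it preserves measure, so `f ∘ Z`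
has steep chords of both signs at every interior point. At an endpoint only one side is available,
and the argument needs the value of `f` there to be exceeded and undercut nearby: this is arranged
beforehand by composing `f` with a small fold of the interval. -/

section GeneralFacts

theorem measurePreserving_iff_forall_integral_comp_eq {X Y : Type*} [MeasurableSpace X]
    [TopologicalSpace Y] [MeasurableSpace Y] [BorelSpace Y] [HasOuterApproxClosed Y]
    {μ : Measure X} {ν : Measure Y} [IsFiniteMeasure μ] [IsFiniteMeasure ν] {f : X → Y}
    (hf : Measurable f) :
    MeasurePreserving f μ ν ↔
      ∀ u : BoundedContinuousFunction Y ℝ, ∫ x, u (f x) ∂μ = ∫ y, u y ∂ν := by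
  have integral_map_eq (u : BoundedContinuousFunction Y ℝ) :
      ∫ y, u y ∂μ.map f = ∫ x, u (f x) ∂μ :=
    integral_map hf.aemeasurable u.continuous.aestronglyMeasurable
  refine ⟨fun h u => by rw [← integral_map_eq, h.map_eq], fun h => ⟨hf, ?_⟩⟩
  exact ext_of_forall_integral_eq_of_IsFiniteMeasure fun u => (integral_map_eq u).trans (h u)

theorem isClosed_setOf_measurePreserving {X Y : Type*} [TopologicalSpace X] [MeasurableSpace X]
    [OpensMeasurableSpace X] [TopologicalSpace Y] [MeasurableSpace Y] [BorelSpace Y]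
    [HasOuterApproxClosed Y] [FirstCountableTopology C(X, Y)] (μ : Measure X) (ν : Measure Y)
    [IsFiniteMeasure μ] [IsFiniteMeasure ν] :
    IsClosed {f : C(X, Y) | MeasurePreserving f μ ν} := by
  simp only [measurePreserving_iff_forall_integral_comp_eq (ContinuousMap.measurable _),
    ofPred_forall]
  refine isClosed_iInter fun u => isClosed_eq ?_ continuous_const
  refine continuous_of_dominated (bound := fun _ => ‖u‖)
    (fun f => (u.continuous.comp f.continuous).aestronglyMeasurable)
    (fun f => .of_forall fun x => u.norm_coe_le_norm _) (integrable_const _)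
    (.of_forall fun x => u.continuous.comp (continuous_eval_const x))

theorem nontrivial_image_of_measurePreserving {X Y : Type*} [MeasurableSpace X]
    [MeasurableSpace Y] [MeasurableSingletonClass Y] {μ : Measure X} {ν : Measure Y}
    [NullSingletonClass ν] {f : X → Y} (hf : MeasurePreserving f μ ν) {s : Set X}
    (hs : μ s ≠ 0) : (f '' s).Nontrivial := by
  by_contra h
  have h_sub : (f '' s).Subsingleton := not_nontrivial_iff.1 h
  refine hs (measure_mono_null (subset_preimage_image f s) ?_)
  rw [hf.measure_preimage h_sub.measurableSet.nullMeasurableSet, h_sub.measure_zero]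

theorem isOpen_setOf_forall_mem {X Y : Type*} [TopologicalSpace X] [TopologicalSpace Y]
    [CompactSpace Y] {s : Set (X × Y)} (hs : IsOpen s) : IsOpen {x | ∀ y, (x, y) ∈ s} := by
  refine isOpen_iff_mem_nhds.2 fun x hx => ?_
  refine (isCompact_univ.eventually_forall_of_forall_eventually (P := fun x y => (x, y) ∈ s)
    fun y _ => hs.mem_nhds (hx y)).mono fun x' h y => h y (mem_univ y)

theorem intervalIntegral_comp_abs {E : Type*} [NormedAddCommGroup E] [NormedSpace ℝ E]
    {u : ℝ → E} (hu : Continuous u) {a : ℝ} (ha : 0 ≤ a) :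
    ∫ x in -a..a, u |x| = (2 : ℝ) • ∫ x in 0..a, u x := by
  have on_right : ∫ x in 0..a, u |x| = ∫ x in 0..a, u x :=
    intervalIntegral.integral_congr fun x hx => by
      rw [uIcc_of_le ha] at hx
      simp only [abs_of_nonneg hx.1]
  have on_left : ∫ x in -a..0, u |x| = ∫ x in 0..a, u |x| := by
    simpa using (intervalIntegral.integral_comp_neg (a := 0) (b := a) fun x => u |x|).symm
  have h_int (b c : ℝ) : IntervalIntegrable (fun x => u |x|) volume b c :=
    (hu.comp continuous_abs).intervalIntegrable b c
  rw [← intervalIntegral.integral_add_adjacent_intervals (h_int _ 0) (h_int 0 _), on_left,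
    on_right, two_smul]

end GeneralFacts

section TriangleWave

/-- The triangle wave of period `2`: the distance from `x` to the nearest even integer. -/
noncomputable def triangleWave (x : ℝ) : ℝ := ‖(x : AddCircle (2 : ℝ))‖

@[fun_prop]
theorem continuous_triangleWave : Continuous triangleWave :=
  continuous_norm.comp (AddCircle.continuous_mk' 2)

theorem triangleWave_periodic : Function.Periodic triangleWave 2 := fun x => by
  rw [triangleWave, AddCircle.coe_add_period, triangleWave]

theorem triangleWave_eq_abs {x : ℝ} (hx : |x| ≤ 1) : triangleWave x = |x| :=
  (AddCircle.norm_coe_eq_abs_iff 2 two_ne_zero).2 (by simpa using hx)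

theorem triangleWave_abs (x : ℝ) : triangleWave |x| = triangleWave x := by
  rcases abs_choice x with h | h <;> simp [h, triangleWave]

theorem triangleWave_mem_Icc (x : ℝ) : triangleWave x ∈ Icc (0 : ℝ) 1 :=
  ⟨norm_nonneg _,
    by simpa [triangleWave] using AddCircle.norm_le_half_period 2 (x := x) two_ne_zero⟩

theorem triangleWave_zero : triangleWave 0 = 0 := by
  simp [triangleWave]

theorem triangleWave_natCast_of_odd {m : ℕ} (hm : Odd m) : triangleWave m = 1 := by
  obtain ⟨k, rfl⟩ := hm
  calc triangleWave (2 * k + 1 : ℕ) = triangleWave (1 + k * 2) := by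
        push_cast; ring_nf
    _ = 1 := by rw [triangleWave_periodic.nat_mul, triangleWave_eq_abs] <;> simp

theorem exists_triangleWave_eq {y : ℝ} (hy : y ∈ Icc (0 : ℝ) 1) (a : ℝ) :
    ∃ x ∈ Icc a (a + 2), triangleWave x = y := by
  obtain ⟨x, hx, hxy⟩ := triangleWave_periodic.exists_mem_Ico two_pos y a
  refine ⟨x, Ico_subset_Icc_self hx, ?_⟩
  rw [← hxy, triangleWave_eq_abs] <;> rw [abs_of_nonneg hy.1]
  exact hy.2

theorem integral_comp_triangleWave {E : Type*} [NormedAddCommGroup E] [NormedSpace ℝ E]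
    {u : ℝ → E} (hu : Continuous u) (m : ℕ) :
    ∫ x in 0..m, u (triangleWave x) = (m : ℝ) • ∫ x in 0..1, u x := by
  have h_period : Function.Periodic (fun x => u (triangleWave x)) 2 :=
    triangleWave_periodic.comp u
  have even_extension : ∫ x in -m..m, u (triangleWave x)
      = (2 : ℝ) • ∫ x in 0..m, u (triangleWave x) := by
    simpa only [triangleWave_abs, Function.comp_apply] using
      intervalIntegral_comp_abs (hu.comp continuous_triangleWave) m.cast_nonneg
  have one_period : ∫ x in -1..1, u (triangleWave x) = (2 : ℝ) • ∫ x in 0..1, u x := by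
    rw [← intervalIntegral_comp_abs hu zero_le_one]
    refine intervalIntegral.integral_congr fun x hx => ?_
    rw [uIcc_of_le (by norm_num)] at hx
    simp only [triangleWave_eq_abs (abs_le.2 hx)]
  have h_int (b c : ℝ) : IntervalIntegrable (fun x => u (triangleWave x)) volume b c :=
    (hu.comp continuous_triangleWave).intervalIntegrable b c
  have all_periods : ∫ x in -m..m, u (triangleWave x)
      = (m : ℝ) • ∫ x in -1..1, u (triangleWave x) := by
    have h := h_period.intervalIntegral_add_zsmul_eq m (-m) h_int
    rw [h_period.intervalIntegral_add_eq (-m) (-1)] at h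
    convert h using 2
    · simp only [natCast_zsmul, nsmul_eq_mul]
      ring
    · simp only [natCast_zsmul, Nat.cast_smul_eq_nsmul ℝ]
      norm_num
  refine smul_right_injective E (two_ne_zero (α := ℝ)) ?_
  simp only
  rw [← even_extension, all_periods, one_period, smul_comm]

end TriangleWave

section Zigzag

/-- The zigzag with `m` laps per cell: when `m` is odd, its graph over each integer cell
`[i, i + 1]` crosses the square `[i, i + 1]²` from bottom to top in `m` linear laps. -/
noncomputable def zigzag (m : ℕ) (x : ℝ) : ℝ := ⌊x⌋ + triangleWave (m * Int.fract x)

variable {m : ℕ}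

theorem zigzag_of_mem_Icc (hm : Odd m) {i : ℤ} {x : ℝ} (hx : x ∈ Icc (i : ℝ) (i + 1)) :
    zigzag m x = i + triangleWave (m * (x - i)) := by
  rcases hx.2.lt_or_eq with hlt | rfl
  · rw [zigzag, Int.fract, Int.floor_eq_iff.2 ⟨hx.1, hlt⟩]
  · simp [zigzag, triangleWave_zero, triangleWave_natCast_of_odd hm]

theorem zigzag_intCast (i : ℤ) : zigzag m i = i := by
  simp [zigzag, triangleWave_zero]

theorem zigzag_mem_Icc {i j : ℤ} {x : ℝ} (hx : x ∈ Icc (i : ℝ) j) :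
    zigzag m x ∈ Icc (i : ℝ) j := by
  rcases hx.2.eq_or_lt with rfl | hlt
  · rwa [zigzag_intCast]
  · have h_left : (i : ℝ) ≤ ⌊x⌋ := Int.cast_le.2 (Int.le_floor.2 hx.1)
    have h_right : (⌊x⌋ : ℝ) + 1 ≤ j := by exact_mod_cast Int.floor_lt.2 hlt
    have h := triangleWave_mem_Icc (m * Int.fract x)
    exact ⟨by rw [zigzag]; linarith [h.1], by rw [zigzag]; linarith [h.2]⟩

theorem abs_zigzag_sub_self_le (x : ℝ) : |zigzag m x - x| ≤ 1 := by
  have h := triangleWave_mem_Icc (m * Int.fract x)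
  rw [zigzag, abs_le]
  constructor <;> linarith [h.1, h.2, Int.floor_le x, Int.lt_floor_add_one x]

theorem continuous_zigzag (hm : Odd m) : Continuous (zigzag m) := by
  have h_eq : zigzag m = fun x => x + ((fun s => triangleWave (m * s) - s) ∘ Int.fract) x := by
    ext x
    simp only [zigzag, Function.comp_apply, Int.fract]
    ring
  rw [h_eq]
  refine continuous_id.add (ContinuousOn.comp_fract'' (by fun_prop) ?_)
  simp [triangleWave_zero, triangleWave_natCast_of_odd hm]

theorem Icc_subset_image_zigzag (hm : Odd m) {i : ℤ} {a b : ℝ} (ha : i ≤ a) (hb : b ≤ i + 1)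
    (hab : a + 2 / m ≤ b) : Icc (i : ℝ) (i + 1) ⊆ zigzag m '' Icc a b := by
  intro y hy
  have hm_pos : (0 : ℝ) < m := by exact_mod_cast hm.pos
  obtain ⟨s, hs, hsy⟩ := exists_triangleWave_eq (y := y - i)
    ⟨by linarith [hy.1], by linarith [hy.2]⟩ (m * (a - i))
  have hx : i + s / m ∈ Icc a b := by
    have h_left : a - i ≤ s / m := by rw [le_div_iff₀' hm_pos]; exact hs.1
    have h_right : s / m ≤ a - i + 2 / m := by
      rw [div_le_iff₀' hm_pos, mul_add, mul_div_cancel₀ _ hm_pos.ne']; exact hs.2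
    exact ⟨by linarith, by linarith⟩
  refine ⟨i + s / m, hx, ?_⟩
  rw [zigzag_of_mem_Icc hm ⟨ha.trans hx.1, hx.2.trans hb⟩, add_sub_cancel_left,
    mul_div_cancel₀ _ hm_pos.ne', hsy, add_sub_cancel]

variable {E : Type*} [NormedAddCommGroup E] [NormedSpace ℝ E] {u : ℝ → E}

theorem integral_comp_zigzag_Icc (hm : Odd m) (hu : Continuous u) (i : ℤ) :
    ∫ x in i..i + 1, u (zigzag m x) = ∫ x in i..i + 1, u x := by
  have hm_ne : (m : ℝ) ≠ 0 := by exact_mod_cast hm.pos.ne'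
  calc ∫ x in i..i + 1, u (zigzag m x)
      = ∫ x in i..i + 1, u (i + triangleWave (m * (x - i))) :=
        intervalIntegral.integral_congr fun x hx => by
          rw [uIcc_of_le (by linarith)] at hx
          simp only [zigzag_of_mem_Icc hm hx]
    _ = ∫ x in 0..1, u (i + triangleWave (m * x)) := by
        simp [intervalIntegral.integral_comp_sub_right fun x => u (i + triangleWave (m * x))]
    _ = (m : ℝ)⁻¹ • ∫ x in 0..m, u (i + triangleWave x) := by
        simp [intervalIntegral.integral_comp_mul_left (fun x => u (i + triangleWave x)) hm_ne]
    _ = ∫ x in 0..1, u (i + x) := by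
        rw [integral_comp_triangleWave (u := fun x => u (i + x)) (by fun_prop),
          inv_smul_smul₀ hm_ne]
    _ = ∫ x in i..i + 1, u x := by simp

theorem integral_comp_zigzag (hm : Odd m) (hu : Continuous u) (N : ℕ) :
    ∫ x in 0..N, u (zigzag m x) = ∫ x in 0..N, u x := by
  have sum_cells {v : ℝ → E} (hv : Continuous v) :
      ∑ i ∈ Finset.range N, ∫ x in i..i + 1, v x = ∫ x in 0..N, v x := by
    simpa using intervalIntegral.sum_integral_adjacent_intervals (μ := volume) (n := N)
      (a := fun i : ℕ => (i : ℝ)) fun i _ => hv.intervalIntegrable _ _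
  rw [← sum_cells hu, ← sum_cells (v := fun x => u (zigzag m x)) (hu.comp (continuous_zigzag hm))]
  exact Finset.sum_congr rfl fun i _ => by
    simpa using integral_comp_zigzag_Icc hm hu i

end Zigzag

section Fold

/-- The map of the half-line `[0, ∞)` that folds `[0, p]` in half onto itself, sending both `0`
and `p` to `p`, and fixes every point beyond `p`. -/
noncomputable def fold (p x : ℝ) : ℝ := if x ≤ p then |2 * x - p| else x

variable {p : ℝ}

theorem fold_of_le {x : ℝ} (hx : x ≤ p) : fold p x = |2 * x - p| := if_pos hx

theorem fold_of_ge (hp : 0 ≤ p) {x : ℝ} (hx : p ≤ x) : fold p x = x := by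
  rcases hx.eq_or_lt with rfl | hlt
  · rw [fold_of_le le_rfl, two_mul, add_sub_cancel_right, abs_of_nonneg hp]
  · exact if_neg hlt.not_ge

theorem fold_zero (hp : 0 ≤ p) : fold p 0 = p := by
  rw [fold_of_le hp, mul_zero, zero_sub, abs_neg, abs_of_nonneg hp]

theorem continuous_fold (hp : 0 ≤ p) : Continuous (fold p) :=
  Continuous.if_le (by fun_prop) continuous_id continuous_id continuous_const fun x hx => by
    simp [hx, two_mul, abs_of_nonneg hp]

theorem fold_mem_Icc (hp : 0 ≤ p) {x w : ℝ} (hpw : p ≤ w) (hx : x ∈ Icc 0 w) :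
    fold p x ∈ Icc 0 w := by
  rcases le_total x p with h | h
  · rw [fold_of_le h]
    exact ⟨abs_nonneg _, abs_le.2 ⟨by linarith [hx.1], by linarith [hx.1]⟩⟩
  · rwa [fold_of_ge hp h]

theorem exists_fold_eq (hp : 0 ≤ p) {y w : ℝ} (hpw : p ≤ w) (hy : y ∈ Icc 0 w) :
    ∃ x ∈ Icc 0 w, fold p x = y := by
  rcases le_total y p with h | h
  · refine ⟨(y + p) / 2, ⟨by linarith [hy.1], by linarith⟩, ?_⟩
    rw [fold_of_le (by linarith), mul_div_cancel₀ _ two_ne_zero, add_sub_cancel_right,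
      abs_of_nonneg hy.1]
  · exact ⟨y, hy, fold_of_ge hp h⟩

theorem abs_fold_sub_self_le (hp : 0 ≤ p) {x : ℝ} (hx : 0 ≤ x) : |fold p x - x| ≤ p := by
  rcases le_total x p with h | h
  · rw [fold_of_le h]
    rcases abs_cases (2 * x - p) with ⟨h_abs, _⟩ | ⟨h_abs, _⟩ <;> rw [h_abs, abs_le] <;>
      constructor <;> linarith
  · rwa [fold_of_ge hp h, sub_self, abs_zero]

theorem integral_comp_fold {E : Type*} [NormedAddCommGroup E] [NormedSpace ℝ E] {u : ℝ → E}
    (hu : Continuous u) (hp : 0 ≤ p) {b : ℝ} (hpb : p ≤ b) :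
    ∫ x in 0..b, u (fold p x) = ∫ x in 0..b, u x := by
  have on_fold : ∫ x in 0..p, u (fold p x) = ∫ x in 0..p, u x :=
    calc ∫ x in 0..p, u (fold p x)
        = ∫ x in 0..p, u |2 * x - p| := intervalIntegral.integral_congr fun x hx => by
          rw [uIcc_of_le hp] at hx
          simp only [fold_of_le hx.2]
      _ = (2 : ℝ)⁻¹ • ∫ x in -p..p, u |x| := by
          rw [intervalIntegral.integral_comp_mul_sub (fun x => u |x|) two_ne_zero]
          congr 2 <;> ring
      _ = ∫ x in 0..p, u x := by
          rw [intervalIntegral_comp_abs hu hp, inv_smul_smul₀ two_ne_zero]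
  have beyond_fold : ∫ x in p..b, u (fold p x) = ∫ x in p..b, u x :=
    intervalIntegral.integral_congr fun x hx => by
      rw [uIcc_of_le hpb] at hx
      simp only [fold_of_ge hp hx.1]
  have h_int {v : ℝ → E} (hv : Continuous v) (c d : ℝ) : IntervalIntegrable v volume c d :=
    hv.intervalIntegrable c d
  rw [← intervalIntegral.integral_add_adjacent_intervals (h_int hu 0 p) (h_int hu p b),
    ← intervalIntegral.integral_add_adjacent_intervals
      (h_int (v := fun x => u (fold p x)) (hu.comp (continuous_fold hp)) 0 p)
      (h_int (hu.comp (continuous_fold hp)) p b), on_fold, beyond_fold]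

end Fold

namespace CLam

open unitInterval

instance : CompleteSpace CLam :=
  (isClosed_setOf_measurePreserving volume volume).completeSpace_coe

theorem exists_coe_apply_eq {h : ℝ → ℝ} (h_cont : Continuous h) (h_maps : MapsTo h I I)
    (h_int : ∀ u : ℝ → ℝ, Continuous u → ∫ x in 0..1, u (h x) = ∫ x in 0..1, u x) :
    ∃ f : CLam, ∀ x, (f.1 x : ℝ) = h x := by
  have integral_coe (v : ℝ → ℝ) : ∫ x : I, v x = ∫ x in 0..1, v x := by
    rw [integral_subtype measurableSet_Icc, integral_Icc_eq_integral_Ioc,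
      intervalIntegral.integral_of_le zero_le_one]
  let f : C(I, I) := ⟨fun x => ⟨h x, h_maps x.2⟩, by fun_prop⟩
  refine ⟨⟨f, (measurePreserving_iff_forall_integral_comp_eq f.measurable).2 fun u => ?_⟩,
    fun x => rfl⟩
  have extend (x : I) : u x = u (projIcc 0 1 zero_le_one x) := by rw [projIcc_val]
  calc ∫ x, u (f x) = ∫ x : I, u (projIcc 0 1 zero_le_one (h x)) :=
        integral_congr_ae (.of_forall fun x => extend (f x))
    _ = ∫ x : I, u (projIcc 0 1 zero_le_one x) := by
        rw [integral_coe fun x => u (projIcc 0 1 zero_le_one (h x)),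
          h_int (fun x => u (projIcc 0 1 zero_le_one x)) (by fun_prop),
          integral_coe fun x => u (projIcc 0 1 zero_le_one x)]
    _ = ∫ x, u x := by simp only [← extend]

/-- The identity of `[0,1]` as a point of `C_λ`. -/
protected def id : CLam := ⟨.id I, .id volume⟩

/-- Composition in `C_λ`. -/
def comp (f g : CLam) : CLam := ⟨f.1.comp g.1, f.2.comp g.2⟩

@[simp]
theorem coe_id : ⇑CLam.id.1 = id := rfl

@[simp]
theorem coe_comp (f g : CLam) : ⇑(comp f g).1 = f.1 ∘ g.1 := rfl

theorem continuous_comp : Continuous fun p : CLam × CLam => comp p.1 p.2 :=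
  (ContinuousMap.continuous_comp'.comp
    ((continuous_subtype_val.comp continuous_snd).prodMk
      (continuous_subtype_val.comp continuous_fst))).subtype_mk _

theorem dist_id_le {f : CLam} {h : ℝ → ℝ} (hfh : ∀ x, (f.1 x : ℝ) = h x) {ε : ℝ} (hε : 0 ≤ ε)
    (h_near : ∀ x ∈ I, |h x - x| ≤ ε) : dist f CLam.id ≤ ε :=
  (ContinuousMap.dist_le hε).2 fun x => by
    simpa [Subtype.dist_eq, Real.dist_eq, hfh] using h_near x x.2

theorem dist_comp_id_le (f g : CLam) :
    dist (comp f g) CLam.id ≤ dist f CLam.id + dist g CLam.id := by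
  refine (ContinuousMap.dist_le (by positivity)).2 fun x => ?_
  calc dist (f.1 (g.1 x)) x ≤ dist (f.1 (g.1 x)) (g.1 x) + dist (g.1 x) x := dist_triangle ..
    _ ≤ dist f CLam.id + dist g CLam.id :=
      add_le_add (f.1.dist_apply_le_dist (g := .id I) _) (g.1.dist_apply_le_dist (g := .id I) _)

/-- The involution `f ↦ f ∘ (x ↦ 1 - x)` of `C_λ`, which exchanges the two endpoints. -/
def reverse : CLam ≃ₜ CLam :=
  have reverse_reverse : Function.Involutive fun f : CLam =>
      comp f ⟨⟨σ, continuous_symm⟩, measurePreserving_symm⟩ := fun f => by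
    ext x
    simp
  have h_cont : Continuous fun f : CLam =>
      comp f ⟨⟨σ, continuous_symm⟩, measurePreserving_symm⟩ :=
    continuous_comp.comp (continuous_id.prodMk continuous_const)
  ⟨reverse_reverse.toPerm, h_cont, h_cont⟩

theorem nontrivial_image_Icc (f : CLam) {a b : I} (hab : a < b) : (f.1 '' Icc a b).Nontrivial :=
  nontrivial_image_of_measurePreserving f.2 <| by
    simpa [unitInterval.volume_Icc] using hab

theorem exists_eq_zigzag {m N : ℕ} (hm : Odd m) (hN : 0 < N) :
    ∃ Z : CLam, ∀ x, (Z.1 x : ℝ) = zigzag m (N * x) / N := by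
  have hN' : (0 : ℝ) < N := Nat.cast_pos.2 hN
  refine exists_coe_apply_eq (h := fun x => zigzag m (N * x) / N)
    (((continuous_zigzag hm).comp (by fun_prop)).div_const _) ?_ ?_
  · intro x hx
    have h := zigzag_mem_Icc (m := m) (i := 0) (j := N) (x := N * x)
      ⟨by simpa using mul_nonneg hN'.le hx.1, by simpa using mul_le_of_le_one_right hN'.le hx.2⟩
    push_cast at h
    exact ⟨div_nonneg h.1 hN'.le, div_le_one_of_le₀ h.2 hN'.le⟩
  intro u hu
  calc ∫ x in 0..1, u (zigzag m (N * x) / N)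
      = (N : ℝ)⁻¹ • ∫ x in 0..N, u (zigzag m x / N) := by
        simp [intervalIntegral.integral_comp_mul_left (fun x => u (zigzag m x / N)) hN'.ne']
    _ = (N : ℝ)⁻¹ • ∫ x in 0..N, u (x / N) := by
        rw [integral_comp_zigzag (u := fun x => u (x / N)) hm (by fun_prop)]
    _ = ∫ x in 0..1, u x := by
        simp [intervalIntegral.integral_comp_div u hN'.ne', hN'.ne']

end CLam

section Steep

open unitInterval Metric

/-- `g` is `c`-steep at `x` if chords of its graph issuing from `x` attain slopes greater than `c`
and slopes less than `-c`. Slope inequalities are multiplied out by `(t - x) ^ 2`. -/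
def IsSteepAt (c : ℝ) (g : I → ℝ) (x : I) : Prop :=
  (∃ t : I, c * ((t : ℝ) - x) ^ 2 < (g t - g x) * (t - x)) ∧
    ∃ t : I, (g t - g x) * (t - x) < -(c * ((t : ℝ) - x) ^ 2)

variable {c η : ℝ} {g : I → ℝ} {x : I}

theorem IsSteepAt.neg (h : IsSteepAt c g x) : IsSteepAt c (fun t => -g t) x := by
  obtain ⟨⟨t, ht⟩, s, hs⟩ := h
  exact ⟨⟨s, by linarith⟩, t, by linarith⟩

theorem NonDecreasingAt.exists_forall_nonneg (h : NonDecreasingAt g x) :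
    ∃ δ > 0, ∀ t : I, |(t : ℝ) - x| < δ → 0 ≤ (g t - g x) * (t - x) := by
  obtain ⟨δ, hδ, h_left, h_right⟩ := h
  refine ⟨δ, hδ, fun t ht => ?_⟩
  rw [abs_lt] at ht
  rcases lt_trichotomy (t : ℝ) x with hlt | heq | hgt
  · exact mul_nonneg_of_nonpos_of_nonpos (sub_nonpos.2 (h_left t (by linarith) hlt)) (by linarith)
  · simp [heq]
  · exact mul_nonneg (sub_nonneg.2 (h_right t hgt (by linarith))) (by linarith)

theorem not_nonDecreasingAt_sub_mul (hg : Bornology.IsBounded (range g))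
    (h_steep : ∀ n : ℕ, IsSteepAt n g x) (γ : ℝ) : ¬ NonDecreasingAt (fun t => g t - γ * t) x := by
  intro h_mono
  obtain ⟨δ, hδ, h_nonneg⟩ := h_mono.exists_forall_nonneg
  obtain ⟨n, hn⟩ := exists_nat_ge (max |γ| (diam (range g) / δ))
  obtain ⟨hnγ, hnδ⟩ := max_le_iff.1 hn
  obtain ⟨t, ht⟩ := (h_steep n).2
  have ht_pos : 0 < |(t : ℝ) - x| := abs_pos.2 fun h0 => by simp [h0] at ht
  have h_osc : |g t - g x| ≤ n * δ :=
    (dist_le_diam_of_mem hg (mem_range_self t) (mem_range_self x)).trans ((div_le_iff₀ hδ).1 hnδ)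
  have h_close : |(t : ℝ) - x| < δ := by
    by_contra! h_far
    have : |g t - g x| * |(t : ℝ) - x| ≤ n * ((t : ℝ) - x) ^ 2 := by
      rw [← sq_abs ((t : ℝ) - x), sq, ← mul_assoc]
      gcongr
      exact h_osc.trans (by gcongr)
    linarith [neg_abs_le ((g t - g x) * ((t : ℝ) - x)), abs_mul (g t - g x) ((t : ℝ) - x)]
  have h_slope : 0 ≤ (n + γ) * ((t : ℝ) - x) ^ 2 :=
    mul_nonneg (by linarith [neg_abs_le γ]) (sq_nonneg _)
  linarith [h_nonneg t h_close]

theorem not_monotonicTypeAt_of_isSteepAt (hg : Bornology.IsBounded (range g))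
    (h_steep : ∀ n : ℕ, IsSteepAt n g x) : ¬ MonotonicTypeAt g x := by
  rintro ⟨γ, h | h⟩
  · exact not_nonDecreasingAt_sub_mul hg h_steep γ h
  · refine not_nonDecreasingAt_sub_mul (g := fun t => -g t) ?_ (fun n => (h_steep n).neg) (-γ) ?_
    · rw [range_comp' Neg.neg g, image_neg_eq_neg]
      exact hg.neg
    · convert h using 2
      ring

theorem mul_sq_lt_of_dist_le (hc : 0 ≤ c) {s : I} (hs : dist s x ≤ η)
    (h : c * η < |g s - g x|) : c * ((s : ℝ) - x) ^ 2 < |(g s - g x) * (s - x)| := by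
  have hs_pos : 0 < |(s : ℝ) - x| := abs_pos.2 fun h0 => by
    rw [sub_eq_zero, Subtype.coe_inj] at h0
    subst h0
    rw [sub_self, abs_zero] at h
    exact h.not_ge (mul_nonneg hc (dist_nonneg.trans hs))
  rw [← sq_abs ((s : ℝ) - x), sq, ← mul_assoc, abs_mul]
  gcongr
  exact lt_of_le_of_lt (by gcongr; exact hs) h

theorem isSteepAt_of_mem_image (hc : 0 ≤ c)
    (h_up : (∃ y ∈ g '' (closedBall x η ∩ Ici x), c * η < y - g x) ∨
      ∃ y ∈ g '' (closedBall x η ∩ Iic x), c * η < g x - y)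
    (h_down : (∃ y ∈ g '' (closedBall x η ∩ Ici x), c * η < g x - y) ∨
      ∃ y ∈ g '' (closedBall x η ∩ Iic x), c * η < y - g x) : IsSteepAt c g x := by
  have hcη {s : I} (hs : s ∈ closedBall x η) : 0 ≤ c * η :=
    mul_nonneg hc (dist_nonneg.trans hs)
  have rising {s : I} (hs : s ∈ closedBall x η) (h : c * η < |g s - g x|)
      (h_sign : 0 ≤ (g s - g x) * (s - x)) :=
    abs_of_nonneg h_sign ▸ mul_sq_lt_of_dist_le hc hs h
  have falling {s : I} (hs : s ∈ closedBall x η) (h : c * η < |g s - g x|)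
      (h_sign : (g s - g x) * (s - x) ≤ 0) :=
    lt_neg_of_lt_neg (abs_of_nonpos h_sign ▸ mul_sq_lt_of_dist_le hc hs h)
  constructor
  · rcases h_up with ⟨_, ⟨s, ⟨hs, hxs⟩, rfl⟩, h⟩ | ⟨_, ⟨s, ⟨hs, hsx⟩, rfl⟩, h⟩
    · exact ⟨s, rising hs (lt_abs.2 (.inl h))
        (mul_nonneg (by linarith [hcη hs]) (sub_nonneg.2 hxs))⟩
    · exact ⟨s, rising hs (lt_abs.2 (.inr (by linarith)))
        (mul_nonneg_of_nonpos_of_nonpos (by linarith [hcη hs]) (sub_nonpos.2 hsx))⟩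
  · rcases h_down with ⟨_, ⟨s, ⟨hs, hxs⟩, rfl⟩, h⟩ | ⟨_, ⟨s, ⟨hs, hsx⟩, rfl⟩, h⟩
    · exact ⟨s, falling hs (lt_abs.2 (.inr (by linarith)))
        (mul_nonpos_of_nonpos_of_nonneg (by linarith [hcη hs]) (sub_nonneg.2 hxs))⟩
    · exact ⟨s, falling hs (lt_abs.2 (.inl h))
        (mul_nonpos_of_nonneg_of_nonpos (by linarith [hcη hs]) (sub_nonpos.2 hsx))⟩

theorem isSteepAt_of_subset_inter (hc : 0 ≤ c) {u v : ℝ} (huv : 2 * (c * η) < v - u)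
    (h_left : {u, v} ⊆ g '' (closedBall x η ∩ Iic x))
    (h_right : {u, v} ⊆ g '' (closedBall x η ∩ Ici x)) : IsSteepAt c g x := by
  simp only [insert_subset_iff, singleton_subset_iff] at h_left h_right
  rcases lt_or_ge (c * η) (v - g x) with h | h
  · exact isSteepAt_of_mem_image hc (.inl ⟨v, h_right.2, h⟩) (.inr ⟨v, h_left.2, h⟩)
  · have h' : c * η < g x - u := by linarith
    exact isSteepAt_of_mem_image hc (.inr ⟨u, h_left.1, h'⟩) (.inl ⟨u, h_right.1, h'⟩)

theorem isSteepAt_of_subset_right (hc : 0 ≤ c) {u v w : ℝ} (huv : 2 * (c * η) < v - u)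
    (hvw : 2 * (c * η) < w - v) (h_left : v ∈ g '' (closedBall x η ∩ Iic x))
    (h_right : {u, v, w} ⊆ g '' (closedBall x η ∩ Ici x)) : IsSteepAt c g x := by
  simp only [insert_subset_iff, singleton_subset_iff] at h_right
  refine isSteepAt_of_mem_image (η := η) hc ?_ ?_
  · rcases lt_or_ge (c * η) (w - g x) with h | h
    · exact .inl ⟨w, h_right.2.2, h⟩
    · exact .inr ⟨v, h_left, by linarith⟩
  · rcases lt_or_ge (c * η) (g x - u) with h | h
    · exact .inl ⟨u, h_right.1, h⟩
    · exact .inr ⟨v, h_left, by linarith⟩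

theorem isSteepAt_of_subset_left (hc : 0 ≤ c) {u v w : ℝ} (huv : 2 * (c * η) < v - u)
    (hvw : 2 * (c * η) < w - v) (h_right : v ∈ g '' (closedBall x η ∩ Ici x))
    (h_left : {u, v, w} ⊆ g '' (closedBall x η ∩ Iic x)) : IsSteepAt c g x := by
  simp only [insert_subset_iff, singleton_subset_iff] at h_left
  refine isSteepAt_of_mem_image (η := η) hc ?_ ?_
  · rcases lt_or_ge (c * η) (g x - u) with h | h
    · exact .inr ⟨u, h_left.1, h⟩
    · exact .inl ⟨v, h_right, by linarith⟩
  · rcases lt_or_ge (c * η) (w - g x) with h | h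
    · exact .inr ⟨w, h_left.2.2, h⟩
    · exact .inl ⟨v, h_right, by linarith⟩

theorem CLam.isOpen_setOf_forall_isSteepAt (c : ℝ) :
    IsOpen {f : CLam | ∀ x, IsSteepAt c (fun t => f.1 t) x} := by
  refine isOpen_setOf_forall_mem (s := {p : CLam × I | IsSteepAt c (fun t => p.1.1 t) p.2}) ?_
  simp only [IsSteepAt, ofPred_and, ofPred_exists]
  exact (isOpen_iUnion fun t => isOpen_lt (by fun_prop) (by fun_prop)).inter
    (isOpen_iUnion fun t => isOpen_lt (by fun_prop) (by fun_prop))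

end Steep

section Sweep

open unitInterval Metric

/-- The `i`-th cell `[i / N, (i + 1) / N]` of the partition of `[0,1]` into `N` equal cells. -/
def cell (N : ℕ) (i : ℤ) : Set I := {t | (N : ℝ) * t ∈ Icc (i : ℝ) (i + 1)}

/-- At scale `η`, the map `Z` sweeps the partition of `[0,1]` into `N` cells if near every point
`x`, within distance `η`, it covers a common cell from both sides of `x`. Near the endpoints, where
one side is missing, `Z` covers the extreme cell from the other side, and takes the value of the
endpoint on the short side. -/
def Sweeps (Z : CLam) (N : ℕ) (η : ℝ) : Prop :=
  ∀ x : I,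
    (∃ i ∈ Ico (0 : ℤ) N, cell N i ⊆ Z.1 '' (closedBall x η ∩ Iic x) ∧
      cell N i ⊆ Z.1 '' (closedBall x η ∩ Ici x)) ∨
    (0 ∈ Z.1 '' (closedBall x η ∩ Iic x) ∧ cell N 0 ⊆ Z.1 '' (closedBall x η ∩ Ici x)) ∨
    (1 ∈ Z.1 '' (closedBall x η ∩ Ici x) ∧ cell N (N - 1) ⊆ Z.1 '' (closedBall x η ∩ Iic x))

section GridZigzag

variable {Z : CLam} {m N : ℕ}

theorem dist_id_le_of_eq_zigzag (hN : 0 < N) (hZ : ∀ x, (Z.1 x : ℝ) = zigzag m (N * x) / N) :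
    dist Z CLam.id ≤ 1 / N := by
  have hN' : (0 : ℝ) < N := Nat.cast_pos.2 hN
  refine CLam.dist_id_le (h := fun x => zigzag m (N * x) / N) hZ (by positivity) fun x _ => ?_
  have h_eq : zigzag m (N * x) / N - x = (zigzag m (N * x) - N * x) / N := by field_simp
  rw [h_eq, abs_div, abs_of_pos hN']
  gcongr
  exact abs_zigzag_sub_self_le _

theorem apply_zero_of_eq_zigzag (hZ : ∀ x, (Z.1 x : ℝ) = zigzag m (N * x) / N) : Z.1 0 = 0 :=
  Subtype.ext <| by
    have h := zigzag_intCast (m := m) 0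
    simp_all

theorem apply_one_of_eq_zigzag (hN : 0 < N) (hZ : ∀ x, (Z.1 x : ℝ) = zigzag m (N * x) / N) :
    Z.1 1 = 1 :=
  Subtype.ext <| by
    have h := zigzag_intCast (m := m) N
    have hN' : (N : ℝ) ≠ 0 := Nat.cast_ne_zero.2 hN.ne'
    simp_all

theorem cell_subset_image_of_eq_zigzag (hm : Odd m)
    (hZ : ∀ x, (Z.1 x : ℝ) = zigzag m (N * x) / N) {i : ℤ} (hi : i ∈ Ico (0 : ℤ) N) {a b : ℝ}
    (ha : i ≤ a) (hb : b ≤ i + 1) (hab : a + 2 / m ≤ b) :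
    cell N i ⊆ Z.1 '' {s | (N : ℝ) * s ∈ Icc a b} := by
  intro t ht
  have hN : (0 : ℝ) < N := by exact_mod_cast hi.1.trans_lt hi.2
  have hi_nonneg : (0 : ℝ) ≤ i := Int.cast_nonneg hi.1
  have hi_lt : (i : ℝ) + 1 ≤ N := by exact_mod_cast Int.add_one_le_of_lt hi.2
  obtain ⟨y, hy, hyt⟩ := Icc_subset_image_zigzag hm ha hb hab ht
  have hyN : (N : ℝ) * (y / N) = y := mul_div_cancel₀ _ hN.ne'
  refine ⟨⟨y / N, div_nonneg (by linarith [hy.1]) hN.le,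
    div_le_one_of_le₀ (by linarith [hy.2]) hN.le⟩, ?_, Subtype.ext ?_⟩
  · rwa [mem_ofPred_eq, hyN]
  · rw [hZ, hyN, hyt, mul_div_cancel_left₀ _ hN.ne']

theorem cell_floor_subset_image_of_eq_zigzag (hm : Odd m) (hm4 : 4 ≤ m)
    (hZ : ∀ x, (Z.1 x : ℝ) = zigzag m (N * x) / N) {y : ℝ} (hy : y ∈ Ico (0 : ℝ) N) :
    cell N ⌊y⌋ ⊆ Z.1 '' {s | (N : ℝ) * s ∈ Icc (y - 2 / m) (y + 2 / m)} := by
  have h_floor : ⌊y⌋ ∈ Ico (0 : ℤ) N := ⟨Int.floor_nonneg.2 hy.1, Int.floor_lt.2 hy.2⟩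
  have hm_pos : (0 : ℝ) < m := by exact_mod_cast hm.pos
  have h_lap : (2 : ℝ) / m ≤ 1 / 2 := by
    rw [div_le_div_iff₀ hm_pos two_pos]
    exact_mod_cast (by omega : 2 * 2 ≤ 1 * m)
  have h_lap_pos : (0 : ℝ) ≤ 2 / m := by positivity
  rcases le_total (⌊y⌋ : ℝ) (y - 2 / m) with h | h
  · refine (cell_subset_image_of_eq_zigzag hm hZ h_floor h (Int.lt_floor_add_one y).le
      (by linarith)).trans (image_mono fun s hs => ⟨hs.1, by linarith [hs.2]⟩)
  · refine (cell_subset_image_of_eq_zigzag hm hZ h_floor (Int.floor_le y)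
      (b := y + 2 / m) (by linarith) le_rfl).trans
      (image_mono fun s hs => ⟨by linarith [hs.1], hs.2⟩)

theorem mem_closedBall_of_abs_mul_sub_le (hN : 0 < N) {s x : I} {ε : ℝ}
    (h : |(N : ℝ) * s - N * x| ≤ ε) : s ∈ closedBall x ε := by
  have hN' : (1 : ℝ) ≤ N := by exact_mod_cast hN
  rw [← mul_sub, abs_mul, abs_of_nonneg (by linarith)] at h
  exact (le_mul_of_one_le_left (abs_nonneg _) hN').trans h

theorem cell_subset_image_Iic_of_eq_zigzag (hm : Odd m) (hm4 : 4 ≤ m)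
    (hZ : ∀ x, (Z.1 x : ℝ) = zigzag m (N * x) / N) {η : ℝ} (hη : 4 / m ≤ η) {x : I}
    (hx : 2 / m ≤ N * (x : ℝ)) (hN : 0 < N) :
    cell N ⌊N * (x : ℝ) - 2 / m⌋ ⊆ Z.1 '' (closedBall x η ∩ Iic x) := by
  have hN' : (0 : ℝ) < N := Nat.cast_pos.2 hN
  have h_lap_pos : (0 : ℝ) < 2 / m := div_pos two_pos (by exact_mod_cast hm.pos)
  have h_two_laps : (2 : ℝ) / m + 2 / m = 4 / m := by ring
  refine (cell_floor_subset_image_of_eq_zigzag hm hm4 hZ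
    ⟨by linarith, by linarith [mul_le_of_le_one_right hN'.le x.2.2]⟩).trans
    (image_mono fun s hs => ⟨mem_closedBall_of_abs_mul_sub_le hN ?_, ?_⟩)
  · exact abs_le.2 ⟨by linarith [hs.1], by linarith [hs.2]⟩
  · exact Subtype.coe_le_coe.1 (le_of_mul_le_mul_left (by linarith [hs.2]) hN')

theorem cell_subset_image_Ici_of_eq_zigzag (hm : Odd m) (hm4 : 4 ≤ m)
    (hZ : ∀ x, (Z.1 x : ℝ) = zigzag m (N * x) / N) {η : ℝ} (hη : 4 / m ≤ η) {x : I}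
    (hx : N * (x : ℝ) + 2 / m < N) (hN : 0 < N) :
    cell N ⌊N * (x : ℝ) + 2 / m⌋ ⊆ Z.1 '' (closedBall x η ∩ Ici x) := by
  have hN' : (0 : ℝ) < N := Nat.cast_pos.2 hN
  have h_lap_pos : (0 : ℝ) < 2 / m := div_pos two_pos (by exact_mod_cast hm.pos)
  have h_two_laps : (2 : ℝ) / m + 2 / m = 4 / m := by ring
  refine (cell_floor_subset_image_of_eq_zigzag hm hm4 hZ
    ⟨by linarith [mul_nonneg hN'.le x.2.1], hx⟩).trans
    (image_mono fun s hs => ⟨mem_closedBall_of_abs_mul_sub_le hN ?_, ?_⟩)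
  · exact abs_le.2 ⟨by linarith [hs.1], by linarith [hs.2]⟩
  · exact Subtype.coe_le_coe.1 (le_of_mul_le_mul_left (by linarith [hs.1]) hN')

theorem cell_subset_image_cell_of_eq_zigzag (hm : Odd m) (hmN : 2 * (N + 1) ≤ m)
    (hZ : ∀ x, (Z.1 x : ℝ) = zigzag m (N * x) / N) {i j : ℤ} (hi : i ∈ Ico (0 : ℤ) N)
    (hij : i ≤ j) (hji : j ≤ i + 1) : cell N i ⊆ Z.1 '' cell (N + 1) j := by
  have hN : (0 : ℝ) < N := by exact_mod_cast hi.1.trans_lt hi.2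
  have hm_pos : (0 : ℝ) < m := by exact_mod_cast hm.pos
  have hi_nonneg : (0 : ℝ) ≤ i := Int.cast_nonneg hi.1
  have hi_lt : (i : ℝ) + 1 ≤ N := by exact_mod_cast Int.add_one_le_of_lt hi.2
  have h_lap : (2 : ℝ) / m ≤ 1 / (N + 1) := by
    rw [div_le_div_iff₀ hm_pos (by positivity)]
    exact_mod_cast (by omega : 2 * (N + 1) ≤ 1 * m)
  obtain ⟨d, hd⟩ : ∃ d : ℝ, d = (i + 1) / (N + 1) := ⟨_, rfl⟩
  have h_add : N * d + d = i + 1 := by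
    rw [hd]
    field_simp
  have h_width : (0 : ℝ) ≤ 1 / (N + 1) := by positivity
  have h_gap_left : 1 / (N + 1) ≤ d := by
    rw [hd]
    gcongr
    linarith
  have h_gap_right : d + 1 / (N + 1) ≤ 1 := by
    rw [hd, ← add_div]
    exact div_le_one_of_le₀ (by linarith) (by positivity)
  obtain rfl | rfl : j = i ∨ j = i + 1 := by lia
  · refine (cell_subset_image_of_eq_zigzag hm hZ hi le_rfl (b := N * d) (by linarith)
      (by linarith)).trans (image_mono fun s hs => ?_)
    have hsd : (s : ℝ) ≤ d := le_of_mul_le_mul_left hs.2 hN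
    refine ⟨?_, ?_⟩ <;> push_cast
    · linarith [hs.1, s.2.1]
    · linarith [hs.2]
  · refine (cell_subset_image_of_eq_zigzag hm hZ hi (a := N * d) (by linarith) le_rfl
      (by linarith)).trans (image_mono fun s hs => ?_)
    have hsd : d ≤ s := le_of_mul_le_mul_left hs.1 hN
    refine ⟨?_, ?_⟩ <;> push_cast
    · linarith [hs.1]
    · linarith [hs.2, s.2.2]

end GridZigzag

theorem sweeps_of_floor_cell_subset {Z : CLam} {N : ℕ} {κ η : ℝ} (hN : 0 < N) (hκ_pos : 0 < κ)
    (hκ : 2 * κ ≤ 1) (hκη : κ ≤ η) (h_fix_zero : Z.1 0 = 0) (h_fix_one : Z.1 1 = 1)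
    (h_left : ∀ x : I, κ ≤ (N + 1 : ℕ) * (x : ℝ) → ∀ i ∈ Ico (0 : ℤ) N,
      ⌊(N + 1 : ℕ) * (x : ℝ) - κ⌋ ∈ Icc i (i + 1) → cell N i ⊆ Z.1 '' (closedBall x η ∩ Iic x))
    (h_right : ∀ x : I, (N + 1 : ℕ) * (x : ℝ) + κ < (N + 1 : ℕ) → ∀ i ∈ Ico (0 : ℤ) N,
      ⌊(N + 1 : ℕ) * (x : ℝ) + κ⌋ ∈ Icc i (i + 1) → cell N i ⊆ Z.1 '' (closedBall x η ∩ Ici x)) :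
    Sweeps Z N η := by
  intro x
  have hN' : (1 : ℝ) ≤ N := by exact_mod_cast hN
  obtain ⟨y, hy⟩ : ∃ y : ℝ, y = (N + 1 : ℕ) * x := ⟨_, rfl⟩
  have hy_nonneg : 0 ≤ y := hy ▸ mul_nonneg (Nat.cast_nonneg _) x.2.1
  have hy_le : y ≤ (N + 1 : ℕ) := hy ▸ mul_le_of_le_one_right (Nat.cast_nonneg _) x.2.2
  have h_near {r : I} (hr : |(N + 1 : ℕ) * (r : ℝ) - y| ≤ κ) : r ∈ closedBall x η :=
    mem_closedBall_of_abs_mul_sub_le N.succ_pos (hy ▸ hr.trans hκη)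
  specialize h_left x
  specialize h_right x
  rw [← hy] at h_left h_right
  push_cast at hy_le h_left h_right h_near
  rcases lt_or_ge y κ with h_zero | h_zero
  · have h_floor : ⌊y + κ⌋ = 0 := Int.floor_eq_zero_iff.2 ⟨by linarith, by linarith⟩
    refine .inr (.inl ⟨⟨0, ⟨h_near (abs_le.2 ?_), x.2.1⟩, h_fix_zero⟩,
      h_right (by linarith) 0 ⟨le_rfl, by lia⟩ (by simp [h_floor])⟩)
    constructor <;> norm_num <;> linarith
  rcases le_or_gt (N + 1 : ℝ) (y + κ) with h_one | h_one
  · have h_floor : ⌊y - κ⌋ = N := Int.floor_eq_iff.2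
      ⟨by push_cast; linarith, by push_cast; linarith⟩
    refine .inr (.inr ⟨⟨1, ⟨h_near (abs_le.2 ?_), x.2.2⟩, h_fix_one⟩,
      h_left h_zero (N - 1) ⟨by lia, by lia⟩ (by simp [h_floor])⟩)
    constructor <;> norm_num <;> linarith
  · have h_nonneg : 0 ≤ ⌊y - κ⌋ := Int.floor_nonneg.2 (by linarith)
    have h_le : ⌊y + κ⌋ ≤ N := Int.lt_add_one_iff.1 (Int.floor_lt.2 (by push_cast; exact h_one))
    have h_mono : ⌊y - κ⌋ ≤ ⌊y + κ⌋ := Int.floor_mono (by linarith)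
    have h_next : ⌊y + κ⌋ ≤ ⌊y - κ⌋ + 1 := by
      rw [← Int.floor_add_one]
      exact Int.floor_mono (by linarith)
    refine .inl ⟨min ⌊y - κ⌋ (N - 1), ⟨by lia, by lia⟩, h_left h_zero _ ⟨by lia, by lia⟩ ?_,
      h_right h_one _ ⟨by lia, by lia⟩ ?_⟩ <;> constructor <;> lia

theorem sweeps_comp_of_eq_zigzag {Z₁ Z₂ : CLam} {m₁ m₂ N : ℕ} {η : ℝ} (hN : 0 < N)
    (hm₁ : Odd m₁) (hmN₁ : 2 * (N + 1) ≤ m₁)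
    (hZ₁ : ∀ x, (Z₁.1 x : ℝ) = zigzag m₁ (N * x) / N)
    (hm₂ : Odd m₂) (hm₂4 : 4 ≤ m₂) (hmη : 4 / m₂ ≤ η)
    (hZ₂ : ∀ x, (Z₂.1 x : ℝ) = zigzag m₂ ((N + 1 : ℕ) * x) / (N + 1 : ℕ)) :
    Sweeps (Z₁.comp Z₂) N η := by
  have image_comp_of {i j : ℤ} {s : Set I} (hi : i ∈ Ico (0 : ℤ) N) (hij : j ∈ Icc i (i + 1))
      (hs : cell (N + 1) j ⊆ Z₂.1 '' s) : cell N i ⊆ (Z₁.comp Z₂).1 '' s := by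
    rw [CLam.coe_comp, image_comp]
    exact (cell_subset_image_cell_of_eq_zigzag hm₁ hmN₁ hZ₁ hi hij.1 hij.2).trans (image_mono hs)
  have h_fix {r : I} (hr₁ : Z₁.1 r = r) (hr₂ : Z₂.1 r = r) : (Z₁.comp Z₂).1 r = r := by
    simp [hr₁, hr₂]
  have hm₂_pos : (0 : ℝ) < m₂ := by exact_mod_cast hm₂.pos
  have h_two_laps : 2 * (2 / m₂ : ℝ) = 4 / m₂ := by ring
  have h_lap_pos : (0 : ℝ) < 2 / m₂ := by positivity
  refine sweeps_of_floor_cell_subset hN h_lap_pos ?_ (by linarith)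
    (h_fix (apply_zero_of_eq_zigzag hZ₁) (apply_zero_of_eq_zigzag hZ₂))
    (h_fix (apply_one_of_eq_zigzag hN hZ₁) (apply_one_of_eq_zigzag N.succ_pos hZ₂))
    (fun x hx i hi hij => image_comp_of hi hij
      (cell_subset_image_Iic_of_eq_zigzag hm₂ hm₂4 hZ₂ hmη hx N.succ_pos))
    (fun x hx i hi hij => image_comp_of hi hij
      (cell_subset_image_Ici_of_eq_zigzag hm₂ hm₂4 hZ₂ hmη hx N.succ_pos))
  rw [h_two_laps]
  exact div_le_one_of_le₀ (by exact_mod_cast hm₂4) hm₂_pos.le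

theorem exists_sweeps {N : ℕ} (hN : 0 < N) {η : ℝ} (hη : 0 < η) :
    ∃ Z : CLam, dist Z CLam.id ≤ 2 / N ∧ Sweeps Z N η := by
  obtain ⟨k, hk⟩ := exists_nat_ge (4 / η)
  obtain ⟨Z₁, hZ₁⟩ := CLam.exists_eq_zigzag (m := 2 * N + 3) ⟨N + 1, by ring⟩ hN
  obtain ⟨Z₂, hZ₂⟩ := CLam.exists_eq_zigzag (m := 2 * k + 5) ⟨k + 2, by ring⟩ N.succ_pos
  refine ⟨Z₁.comp Z₂, ?_, sweeps_comp_of_eq_zigzag hN ⟨N + 1, by ring⟩ (by omega) hZ₁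
    ⟨k + 2, by ring⟩ (by omega) ?_ hZ₂⟩
  · calc dist (Z₁.comp Z₂) CLam.id ≤ dist Z₁ CLam.id + dist Z₂ CLam.id := Z₁.dist_comp_id_le Z₂
      _ ≤ 1 / N + 1 / (N + 1 : ℕ) :=
        add_le_add (dist_id_le_of_eq_zigzag hN hZ₁) (dist_id_le_of_eq_zigzag N.succ_pos hZ₂)
      _ ≤ 1 / N + 1 / N := by gcongr; exact N.le_succ
      _ = 2 / N := by ring
  · rw [div_le_iff₀ hη] at hk
    rw [div_le_iff₀ (by positivity)]
    push_cast
    nlinarith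

end Sweep

section Endpoint

open unitInterval Metric Filter Topology

theorem not_isExtrOn_iff {α β : Type*} [LinearOrder β] {f : α → β} {s : Set α} {a : α} :
    ¬ IsExtrOn f s a ↔ (∃ x ∈ s, f x < f a) ∧ ∃ x ∈ s, f a < f x :=
  (not_or (p := IsMinOn f s a) (q := IsMaxOn f s a)).trans (by simp [isMinOn_iff, isMaxOn_iff])

theorem CLam.exists_eq_fold (p : I) : ∃ Z : CLam, ∀ x, (Z.1 x : ℝ) = fold p x :=
  CLam.exists_coe_apply_eq (continuous_fold p.2.1) (fun _ hx => fold_mem_Icc p.2.1 p.2.2 hx)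
    fun _ hu => integral_comp_fold hu p.2.1 p.2.2

theorem CLam.exists_forall_dist_comp_lt (f : CLam) {ε : ℝ} (hε : 0 < ε) :
    ∃ δ > 0, ∀ f' Z : CLam, dist f' f < δ → dist Z CLam.id < δ → dist (f'.comp Z) f < ε := by
  have h_mem : ∀ᶠ q in 𝓝 (f, CLam.id), CLam.comp q.1 q.2 ∈ ball f ε :=
    CLam.continuous_comp.continuousAt.eventually_mem (ball_mem_nhds f hε)
  obtain ⟨δ, hδ, h⟩ := Metric.eventually_nhds_iff.1 h_mem
  exact ⟨δ, hδ, fun f' Z hf' hZ => h (y := (f', Z)) (max_lt hf' hZ)⟩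

theorem CLam.isOpen_setOf_not_isExtrOn (s : Set I) (r : I) :
    IsOpen {f : CLam | ¬ IsExtrOn f.1 s r} := by
  have h_lt (a b : I) : IsOpen {f : CLam | f.1 a < f.1 b} := isOpen_lt (by fun_prop) (by fun_prop)
  convert (isOpen_biUnion fun t (_ : t ∈ s) => h_lt t r).inter
    (isOpen_biUnion fun t (_ : t ∈ s) => h_lt r t)
  ext f
  simp [not_isExtrOn_iff]

theorem CLam.exists_fold_not_isExtrOn (f : CLam) {w : I} (hw : 0 < w) :
    ∃ Z : CLam, dist Z CLam.id ≤ w ∧ ¬ IsExtrOn (f.comp Z).1 (Icc 0 w) 0 := by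
  obtain ⟨_, ⟨a, ha, rfl⟩, _, ⟨b, hb, rfl⟩, hab⟩ := (f.nontrivial_image_Icc hw).exists_lt
  obtain ⟨y, hay, hyb⟩ := exists_between hab
  obtain ⟨p, hp, rfl⟩ := intermediate_value_uIcc f.1.continuous.continuousOn
    (Icc_subset_uIcc ⟨hay.le, hyb.le⟩)
  have hpw : p ≤ w := (ordConnected_Icc.uIcc_subset ha hb hp).2
  obtain ⟨Z, hZ⟩ := exists_eq_fold p
  have hZ_zero : Z.1 0 = p := Subtype.ext <| by rw [hZ, Icc.coe_zero, fold_zero p.2.1]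
  have hZ_surj {t : I} (ht : t ∈ Icc 0 w) : ∃ s ∈ Icc 0 w, Z.1 s = t := by
    obtain ⟨s, hs, hst⟩ := exists_fold_eq p.2.1 (w := w) hpw ht
    exact ⟨⟨s, hs.1, hs.2.trans w.2.2⟩, hs, Subtype.ext (by rw [hZ, hst])⟩
  refine ⟨Z, (dist_id_le hZ p.2.1 fun x hx => abs_fold_sub_self_le p.2.1 hx.1).trans hpw,
    not_isExtrOn_iff.2 ?_⟩
  obtain ⟨a', ha', rfl⟩ := hZ_surj ha
  obtain ⟨b', hb', rfl⟩ := hZ_surj hb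
  rw [← hZ_zero] at hay hyb
  exact ⟨⟨a', ha', hay⟩, b', hb', hyb⟩

theorem CLam.dense_setOf_not_isExtrOn_zero {s : Set I} (hs : s ∈ 𝓝 0) :
    Dense {f : CLam | ¬ IsExtrOn f.1 s 0} := by
  refine Metric.dense_iff.2 fun f ε hε => ?_
  obtain ⟨δ, hδ, h_comp⟩ := f.exists_forall_dist_comp_lt hε
  obtain ⟨ρ, hρ, hρs⟩ := Metric.mem_nhds_iff.1 hs
  obtain ⟨w, hw, hw_lt⟩ := exists_between (lt_min one_pos (lt_min hδ hρ))
  simp only [lt_min_iff] at hw_lt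
  obtain ⟨Z, hZ, hfZ⟩ := f.exists_fold_not_isExtrOn (w := ⟨w, hw.le, hw_lt.1.le⟩) hw
  have h_sub : Icc 0 ⟨w, hw.le, hw_lt.1.le⟩ ⊆ s := fun x hx => hρs <| by
    rw [mem_ball, Subtype.dist_eq, Icc.coe_zero, Real.dist_0_eq_abs, abs_of_nonneg x.2.1]
    exact lt_of_le_of_lt hx.2 hw_lt.2.2
  exact ⟨f.comp Z, h_comp f Z (by simpa using hδ) (hZ.trans_lt hw_lt.2.1),
    fun h => hfZ (h.on_subset h_sub)⟩

theorem CLam.dense_setOf_not_isExtrOn_one {s : Set I} (hs : s ∈ 𝓝 1) :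
    Dense {f : CLam | ¬ IsExtrOn f.1 s 1} := by
  have h_dense := (dense_setOf_not_isExtrOn_zero (s := σ ⁻¹' s)
    (continuous_symm.continuousAt.preimage_mem_nhds (by simpa using hs))).preimage
    reverse.isOpenMap
  refine h_dense.mono fun f (hf : ¬ IsExtrOn (reverse f).1 (σ ⁻¹' s) 0) h => hf ?_
  have h' : IsExtrOn f.1 s (σ 0) := by rwa [symm_zero]
  exact h'.comp_mapsTo (g := σ) (mapsTo_preimage σ s) rfl

end Endpoint

section Combine

open unitInterval Metric Filter Topology

theorem cell_zero_mem_nhds {N : ℕ} : cell N 0 ∈ 𝓝 0 := by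
  have h_lt : ∀ᶠ t : I in 𝓝 0, (N : ℝ) * t < 1 :=
    (isOpen_lt (by fun_prop) continuous_const).mem_nhds (by simp)
  filter_upwards [h_lt] with t ht
  simpa [cell, ht.le] using mul_nonneg N.cast_nonneg t.2.1

theorem cell_last_mem_nhds {N : ℕ} : cell N (N - 1) ∈ 𝓝 1 := by
  have h_lt : ∀ᶠ t : I in 𝓝 1, (N : ℝ) - 1 < N * t :=
    (isOpen_lt continuous_const (by fun_prop)).mem_nhds (by simp)
  filter_upwards [h_lt] with t ht
  refine ⟨?_, ?_⟩ <;> push_cast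
  · exact ht.le
  · linarith [mul_le_of_le_one_right (N.cast_nonneg (α := ℝ)) t.2.2]

theorem CLam.nontrivial_image_cell (f : CLam) {N : ℕ} {i : ℤ} (hi : i ∈ Ico (0 : ℤ) N) :
    (f.1 '' cell N i).Nontrivial := by
  have hN : (0 : ℝ) < N := by exact_mod_cast hi.1.trans_lt hi.2
  have hi_nonneg : (0 : ℝ) ≤ i := Int.cast_nonneg hi.1
  have hi_le : (i : ℝ) + 1 ≤ N := by exact_mod_cast Int.add_one_le_of_lt hi.2
  let a : I := ⟨i / N, by positivity, div_le_one_of_le₀ (by linarith) hN.le⟩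
  let b : I := ⟨(i + 1) / N, by positivity, div_le_one_of_le₀ hi_le hN.le⟩
  have hab : a < b := div_lt_div_of_pos_right (lt_add_one (i : ℝ)) hN
  refine (f.nontrivial_image_Icc hab).mono (image_mono fun t ht => ?_)
  exact ⟨(div_le_iff₀' hN).1 ht.1, (le_div_iff₀' hN).1 ht.2⟩

theorem CLam.exists_forall_sweeps_isSteepAt (f : CLam) {N : ℕ}
    (h_zero : ¬ IsExtrOn f.1 (cell N 0) 0) (h_one : ¬ IsExtrOn f.1 (cell N (N - 1)) 1) {c : ℝ}
    (hc : 0 ≤ c) :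
    ∃ η > 0, ∀ Z, Sweeps Z N η → ∀ x, IsSteepAt c (fun t => (f.comp Z).1 t) x := by
  have eventually_lt {s t : I} (h : f.1 s < f.1 t) :
      ∀ᶠ η in 𝓝[>] (0 : ℝ), 2 * (c * η) < (f.1 t : ℝ) - f.1 s := by
    refine eventually_nhdsWithin_of_eventually_nhds
      ((isOpen_lt (by fun_prop) continuous_const).mem_nhds ?_)
    simpa using h
  have h_cells : ∀ᶠ η in 𝓝[>] (0 : ℝ), ∀ i ∈ Ico (0 : ℤ) N,
      ∃ s ∈ cell N i, ∃ t ∈ cell N i, 2 * (c * η) < (f.1 t : ℝ) - f.1 s :=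
    (eventually_all_finite (finite_Ico _ _)).2 fun i hi => by
      obtain ⟨_, ⟨s, hs, rfl⟩, _, ⟨t, ht, rfl⟩, hst⟩ := (f.nontrivial_image_cell hi).exists_lt
      exact (eventually_lt hst).mono fun η hη => ⟨s, hs, t, ht, hη⟩
  obtain ⟨⟨a₀, ha₀, ha₀_lt⟩, b₀, hb₀, hb₀_lt⟩ := not_isExtrOn_iff.1 h_zero
  obtain ⟨⟨a₁, ha₁, ha₁_lt⟩, b₁, hb₁, hb₁_lt⟩ := not_isExtrOn_iff.1 h_one
  obtain ⟨η, hη, h_cells, h_below₀, h_above₀, h_below₁, h_above₁⟩ :=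
    (eventually_mem_nhdsWithin.and (h_cells.and ((eventually_lt ha₀_lt).and
      ((eventually_lt hb₀_lt).and ((eventually_lt ha₁_lt).and (eventually_lt hb₁_lt)))))).exists
  refine ⟨η, hη, fun Z hZ x => ?_⟩
  have image_comp_of {s : I} {S : Set I} (hs : s ∈ Z.1 '' S) :
      (f.1 s : ℝ) ∈ (fun t => ((f.comp Z).1 t : ℝ)) '' S := by
    obtain ⟨r, hr, rfl⟩ := hs
    exact ⟨r, hr, rfl⟩
  rcases hZ x with ⟨i, hi, h_left, h_right⟩ | ⟨h_left, h_right⟩ | ⟨h_right, h_left⟩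
  · obtain ⟨s, hs, t, ht, hst⟩ := h_cells i hi
    exact isSteepAt_of_subset_inter hc hst
      (pair_subset (image_comp_of (h_left hs)) (image_comp_of (h_left ht)))
      (pair_subset (image_comp_of (h_right hs)) (image_comp_of (h_right ht)))
  · exact isSteepAt_of_subset_right hc h_below₀ h_above₀ (image_comp_of h_left)
      (insert_subset (image_comp_of (h_right ha₀)) (pair_subset
        (image_comp_of (h_right (mem_of_mem_nhds cell_zero_mem_nhds)))
        (image_comp_of (h_right hb₀))))
  · exact isSteepAt_of_subset_left hc h_below₁ h_above₁ (image_comp_of h_right)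
      (insert_subset (image_comp_of (h_left ha₁)) (pair_subset
        (image_comp_of (h_left (mem_of_mem_nhds cell_last_mem_nhds)))
        (image_comp_of (h_left hb₁))))

theorem CLam.dense_setOf_forall_isSteepAt {c : ℝ} (hc : 0 ≤ c) :
    Dense {f : CLam | ∀ x, IsSteepAt c (fun t => f.1 t) x} := by
  refine Metric.dense_iff.2 fun f ε hε => ?_
  obtain ⟨δ, hδ, h_comp⟩ := f.exists_forall_dist_comp_lt hε
  obtain ⟨N, hN⟩ := exists_nat_gt (2 / δ)
  have hN_pos : (0 : ℝ) < N := (div_pos two_pos hδ).trans hN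
  have h_dense := (dense_setOf_not_isExtrOn_zero (cell_zero_mem_nhds (N := N))).inter_of_isOpen_left
    (dense_setOf_not_isExtrOn_one (cell_last_mem_nhds (N := N))) (isOpen_setOf_not_isExtrOn _ _)
  obtain ⟨f', hf', h_zero, h_one⟩ := Metric.dense_iff.1 h_dense f δ hδ
  obtain ⟨η, hη, h_steep⟩ := f'.exists_forall_sweeps_isSteepAt h_zero h_one hc
  obtain ⟨Z, hZ, hZ_sweeps⟩ := exists_sweeps (Nat.cast_pos.1 hN_pos) hη
  exact ⟨f'.comp Z, h_comp f' Z hf' (hZ.trans_lt ((div_lt_comm₀ hN_pos hδ).2 hN)),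
    h_steep Z hZ_sweeps⟩

end Combine

/-- There is a dense `G_δ` subset of `C_λ` (uniform topology) every member of which is
of nonmonotonic type. -/
theorem stmt9 :
    ∃ S : Set CLam, IsGδ S ∧ Dense S ∧
      ∀ f ∈ S, NonmonotonicType fun x => ((f : CLam).1 x : ℝ) := by
  have h_open (n : ℕ) := CLam.isOpen_setOf_forall_isSteepAt n
  refine ⟨⋂ n : ℕ, {f | ∀ x, IsSteepAt n (fun t => f.1 t) x}, .iInter_of_isOpen h_open,
    dense_iInter_of_isOpen h_open fun n => CLam.dense_setOf_forall_isSteepAt n.cast_nonneg,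
    fun f hf x => not_monotonicTypeAt_of_isSteepAt ?_ fun n => mem_iInter.1 hf n x⟩
  exact (Metric.isBounded_Icc 0 1).subset (range_subset_iff.2 fun t => (f.1 t).2)
end

section
/- For every n ∈ ℕ, the set A_n — consisting of all f ∈ C_λ for which there exist γ ∈ [−n,n] and x ∈ [0,1] such that f(t) − γt ≤ f(x) − γx for all t ∈ [0,1] ∩ (x − 1/n, x) and f(t) − γt ≥ f(x) − γx for all t ∈ [0,1] ∩ (x, x + 1/n) — is nowhere dense in C_λ with respect to the uniform metric. -/
open MeasureTheory Set
open scoped ENNReal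

/-! Given `f ∈ C_λ`, let `u` be the sum of a polynomial close to `f` and a small cosine of very
high odd frequency `N`. The map `x ↦ λ {s | u s ≤ u x}` preserves `λ` by the probability integral
transform, and is close to `f` because `λ {s | f s ≤ f x} = f x`. Where the cosine is nonpositive,
`u` lies well below its value at a cosine peak at most `2 / N` to the left; elsewhere it lies well
above its value at a cosine trough at most `2 / N` to the right, which exists up to the endpoint
`1` because `N` is odd. The values skipped by either drop are taken on a set whose measure is
bounded below independently of `N`. The transformed map thus drops by a fixed amount over a
distance `2 / N` around every point, with slope tending to `-∞`, and so do all maps near it. -/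

open ProbabilityTheory Filter Topology unitInterval

section IntegralTransform

variable {X : Type*} [MeasurableSpace X] {μ : Measure X} [IsProbabilityMeasure μ]

lemma continuous_cdf (ν : Measure ℝ) [IsProbabilityMeasure ν] [NullSingletonClass ν] :
    Continuous (cdf ν) := by
  refine continuous_iff_continuousAt.2 fun y => ?_
  rw [(monotone_cdf ν).continuousAt_iff_leftLim_eq_rightLim, StieltjesFunction.rightLim_eq]
  have jump_nonpos := (cdf ν).measure_singleton y
  rw [measure_cdf, measure_singleton, eq_comm, ENNReal.ofReal_eq_zero, sub_nonpos] at jump_nonpos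
  exact ((monotone_cdf ν).leftLim_le le_rfl).antisymm jump_nonpos

/-- The cumulative distribution function of `ν` as a map into the unit interval, so that it can be
composed with real functions to give self-maps of the interval. -/
noncomputable def unitCdf (ν : Measure ℝ) (y : ℝ) : I :=
  ⟨cdf ν y, cdf_nonneg ν y, cdf_le_one ν y⟩

lemma measurePreserving_unitCdf (ν : Measure ℝ) [IsProbabilityMeasure ν] [NullSingletonClass ν] :
    MeasurePreserving (unitCdf ν) ν volume := by
  have hF : Continuous (cdf ν) := continuous_cdf ν
  have hm : Measurable (unitCdf ν) := (hF.subtype_mk _).measurable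
  refine ⟨hm, ?_⟩
  have : IsProbabilityMeasure (ν.map (unitCdf ν)) :=
    Measure.isProbabilityMeasure_map hm.aemeasurable
  refine Measure.ext_of_Iic _ _ fun y => ?_
  rw [Measure.map_apply hm measurableSet_Iic, volume_Iic]
  change ν {z | cdf ν z ≤ y} = _
  rcases y.2.2.eq_or_lt with hy | hy
  · simp [hy, cdf_le_one]
  rcases {z | cdf ν z ≤ y}.eq_empty_or_nonempty with hS | hS
  · have hy0 : (y : ℝ) ≤ 0 := ge_of_tendsto' (tendsto_cdf_atBot ν) fun z =>
      (not_le.1 (eq_empty_iff_forall_notMem.1 hS z)).le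
    rw [hS, measure_empty, ENNReal.ofReal_of_nonpos hy0]
  obtain ⟨b, hb⟩ := ((tendsto_cdf_atTop ν).eventually_const_lt hy).exists
  have hbdd : BddAbove {z | cdf ν z ≤ y} :=
    ⟨b, fun z hz => le_of_not_ge fun hbz => (hb.trans_le (monotone_cdf ν hbz)).not_ge hz⟩
  have hmax := (isClosed_le hF continuous_const).isGreatest_csSup hS hbdd
  set z := sSup {z | cdf ν z ≤ y}
  obtain ⟨w, hw⟩ := mem_range_of_exists_le_of_exists_ge hF ⟨z, hmax.1⟩ ⟨b, hb.le⟩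
  have hzy : cdf ν z = y :=
    le_antisymm hmax.1 (hw ▸ monotone_cdf ν (hmax.2 hw.le))
  have hIic : {z | cdf ν z ≤ y} = Iic z :=
    Subset.antisymm hmax.2 fun v hv => (monotone_cdf ν hv).trans hmax.1
  rw [hIic, ← ofReal_cdf, hzy]

lemma cdf_map_le_cdf_map_add {u v : X → ℝ} (hu : Measurable u) (hv : Measurable v) {ε : ℝ}
    (h : ∀ s, v s ≤ u s + ε) (y : ℝ) : cdf (μ.map u) y ≤ cdf (μ.map v) (y + ε) := by
  have := Measure.isProbabilityMeasure_map (μ := μ) hu.aemeasurable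
  have := Measure.isProbabilityMeasure_map (μ := μ) hv.aemeasurable
  rw [ProbabilityTheory.cdf_eq_real, ProbabilityTheory.cdf_eq_real,
    map_measureReal_apply hu measurableSet_Iic, map_measureReal_apply hv measurableSet_Iic]
  exact measureReal_mono fun s (hs : u s ≤ y) => (h s).trans (by linarith)

lemma measureReal_le_cdf_map_sub {u : X → ℝ} (hu : Measurable u) {α β : ℝ} (hαβ : α ≤ β)
    {T : Set X} (hT : MapsTo u T (Ioc α β)) :
    μ.real T ≤ cdf (μ.map u) β - cdf (μ.map u) α := by
  have := Measure.isProbabilityMeasure_map (μ := μ) hu.aemeasurable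
  calc μ.real T ≤ μ.real (u ⁻¹' Ioc α β) := measureReal_mono hT
    _ = (μ.map u).real (Ioc α β) := (map_measureReal_apply hu measurableSet_Ioc).symm
    _ = cdf (μ.map u) β - cdf (μ.map u) α := by
      rw [← measure_cdf (μ.map u), measureReal_def, StieltjesFunction.measure_Ioc,
        measure_cdf, ENNReal.toReal_ofReal (sub_nonneg.2 (monotone_cdf _ hαβ))]

instance isProbabilityMeasure_map_continuousMap [TopologicalSpace X] [OpensMeasurableSpace X]
    (u : C(X, ℝ)) : IsProbabilityMeasure (μ.map u) :=
  Measure.isProbabilityMeasure_map u.continuous.aemeasurable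

end IntegralTransform

section Equalize

/-- The measure-preserving map `x ↦ λ {s | u s ≤ u x}` which the probability integral transform
associates with a continuous function `u` with null level sets. -/
noncomputable def equalize (u : C(I, ℝ)) [NullSingletonClass (volume.map u)] : CLam :=
  ⟨⟨unitCdf (volume.map u) ∘ u,
      ((continuous_cdf (volume.map u)).subtype_mk _).comp u.continuous⟩,
    (measurePreserving_unitCdf _).comp (u.continuous.measurable.measurePreserving volume)⟩

lemma coe_equalize_apply (u : C(I, ℝ)) [NullSingletonClass (volume.map u)] (x : I) :
    ((equalize u).1 x : ℝ) = cdf (volume.map u) (u x) :=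
  rfl

lemma cdf_map_coe_apply (f : CLam) (y : I) :
    cdf (volume.map fun s => (f.1 s : ℝ)) y = y := by
  change cdf (volume.map (Subtype.val ∘ f.1)) y = y
  rw [← Measure.map_map measurable_subtype_coe f.2.measurable, f.2.map_eq,
    unitInterval.cdf_eq_real, measureReal_def, volume_Icc]
  simp [y.2.1]

lemma cdf_map_coe_le (f : CLam) {y : ℝ} (hy : 0 ≤ y) :
    cdf (volume.map fun s => (f.1 s : ℝ)) y ≤ y := by
  rcases le_total y 1 with hy' | hy'
  · exact (cdf_map_coe_apply f ⟨y, hy, hy'⟩).le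
  · exact (cdf_le_one _ y).trans hy'

lemma le_cdf_map_coe (f : CLam) {y : ℝ} (hy : y ≤ 1) :
    y ≤ cdf (volume.map fun s => (f.1 s : ℝ)) y := by
  rcases le_total 0 y with hy' | hy'
  · exact (cdf_map_coe_apply f ⟨y, hy', hy⟩).ge
  · exact hy'.trans (cdf_nonneg _ y)

lemma dist_equalize_le {u : C(I, ℝ)} [NullSingletonClass (volume.map u)] {f : CLam} {ε : ℝ}
    (h : ∀ s, |u s - f.1 s| ≤ ε) : dist (equalize u) f ≤ 2 * ε := by
  have hu : Measurable u := u.continuous.measurable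
  have hf : Measurable fun s => (f.1 s : ℝ) := f.2.measurable.subtype_val
  have hε : 0 ≤ ε := (abs_nonneg _).trans (h 0)
  refine (ContinuousMap.dist_le (by positivity)).2 fun x => ?_
  rw [Subtype.dist_eq, Real.dist_eq, coe_equalize_apply, abs_sub_le_iff]
  have hx := abs_le.1 (h x)
  constructor
  · have hmono : cdf (volume.map u) (u x) ≤ cdf (volume.map fun s => (f.1 s : ℝ)) (u x + ε) :=
      cdf_map_le_cdf_map_add hu hf (fun s => by linarith [(abs_le.1 (h s)).1]) _
    have hle := (monotone_cdf (volume.map fun s => (f.1 s : ℝ)))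
      (show u x + ε ≤ f.1 x + 2 * ε by linarith)
    have := cdf_map_coe_le f (show 0 ≤ f.1 x + 2 * ε by linarith [(f.1 x).2.1])
    linarith
  · have hmono : cdf (volume.map fun s => (f.1 s : ℝ)) (f.1 x - 2 * ε) ≤
        cdf (volume.map u) (f.1 x - 2 * ε + ε) :=
      cdf_map_le_cdf_map_add hf hu (fun s => by linarith [(abs_le.1 (h s)).2]) _
    have hle := (monotone_cdf (volume.map u)) (show f.1 x - 2 * ε + ε ≤ u x by linarith)
    have := le_cdf_map_coe f (show f.1 x - 2 * ε ≤ 1 by linarith [(f.1 x).2.2])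
    linarith

end Equalize

section NullLevelSets

lemma volume_level_eq_zero_of_analytic {g : ℝ → ℝ} (hg : AnalyticOnNhd ℝ g univ) {a b : ℝ}
    (hab : g a ≠ g b) (y : ℝ) : volume {x | g x = y} = 0 := by
  obtain ⟨c, hc⟩ : ∃ c, g c - y ≠ 0 := by
    by_contra! h
    exact hab (by linarith [h a, h b])
  have hcod := (hg.sub analyticOnNhd_const).preimage_zero_mem_codiscrete hc
  have hae : ((fun x => g x - y) ⁻¹' {0})ᶜ ∈ ae (volume.restrict (univ : Set ℝ)) :=
    ae_restrict_le_codiscreteWithin MeasurableSet.univ hcod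
  rw [Measure.restrict_univ, mem_ae_iff, compl_compl] at hae
  exact measure_mono_null (fun x (hx : g x = y) => by simp [hx]) hae

lemma nullSingletonClass_map_of_analytic {u : C(I, ℝ)} {g : ℝ → ℝ}
    (hg : AnalyticOnNhd ℝ g univ) (hu : ∀ s : I, u s = g s) {a b : I} (hab : u a ≠ u b) :
    NullSingletonClass ((volume : Measure I).map u) where
  measure_singleton y := by
    rw [Measure.map_apply u.continuous.measurable (measurableSet_singleton y), volume_apply]
    refine measure_mono_null ?_
      (volume_level_eq_zero_of_analytic hg (a := a) (b := b) (by rwa [← hu, ← hu]) y)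
    rintro _ ⟨s, hs, rfl⟩
    exact (hu s).symm.trans hs

end NullLevelSets

section CosineWindows

lemma le_volumeReal_inter_Ioc_of_periodic {P : Set ℝ} (hP : MeasurableSet P) {T r : ℝ}
    (hper : Function.Periodic (· ∈ P) T) (hT : 0 < T) (hr : T ≤ r) (a b : ℝ) :
    r / (2 * T) * volume.real (P ∩ Ioc b (b + T)) ≤ volume.real (P ∩ Ioc a (a + r)) := by
  have hind : Function.Periodic (P.indicator (1 : ℝ → ℝ)) T := fun x => by
    have : x + T ∈ P ↔ x ∈ P := iff_of_eq (hper x)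
    by_cases hx : x ∈ P <;> simp [hx, this]
  have hreal : ∀ {c d : ℝ}, c ≤ d →
      ∫ x in c..d, P.indicator (1 : ℝ → ℝ) x = volume.real (P ∩ Ioc c d) := fun hcd => by
    rw [intervalIntegral.integral_of_le hcd, integral_indicator_one hP,
      measureReal_restrict_apply hP]
  have hint : ∀ c d, IntervalIntegrable (P.indicator (1 : ℝ → ℝ)) volume c d := fun c d =>
    ⟨(integrable_const 1).indicator hP, (integrable_const 1).indicator hP⟩
  have hfloor : ⌊r / T⌋ * T ≤ r := (le_div_iff₀ hT).1 (Int.floor_le _)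
  have h1 : (1 : ℝ) ≤ ⌊r / T⌋ := by
    exact_mod_cast Int.le_floor.2 (by simpa using (one_le_div hT).2 hr)
  have hhalf : r / (2 * T) ≤ ⌊r / T⌋ := by
    have h2 := Int.lt_floor_add_one (r / T)
    rw [mul_comm, ← div_div]
    linarith
  calc r / (2 * T) * volume.real (P ∩ Ioc b (b + T))
      ≤ ⌊r / T⌋ * volume.real (P ∩ Ioc b (b + T)) := by gcongr
    _ = volume.real (P ∩ Ioc a (a + ⌊r / T⌋ * T)) := by
      have := hind.intervalIntegral_add_zsmul_eq ⌊r / T⌋ a hint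
      rw [hind.intervalIntegral_add_eq a b, zsmul_eq_mul, zsmul_eq_mul,
        hreal (c := a) (le_add_of_nonneg_right (mul_nonneg (zero_le_one.trans h1) hT.le)),
        hreal (c := b) (le_add_of_nonneg_right hT.le)] at this
      exact this.symm
    _ ≤ volume.real (P ∩ Ioc a (a + r)) := by
      gcongr
      exact measure_inter_ne_top_of_right_ne_top measure_Ioc_lt_top.ne

lemma cos_mem_Icc_of_mem_Icc {θ : ℝ} (hθ : θ ∈ Icc (Real.pi / 4) (Real.pi / 3)) :
    Real.cos θ ∈ Icc (1 / 2) (3 / 4) := by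
  have hpi := Real.pi_pos
  constructor
  · rw [← Real.cos_pi_div_three]
    exact Real.cos_le_cos_of_nonneg_of_le_pi (by linarith [hθ.1]) (by linarith) hθ.2
  · have hsqrt : √2 ≤ 3 / 2 := (Real.sqrt_le_left (by norm_num)).2 (by norm_num)
    have hcos : Real.cos θ ≤ Real.cos (Real.pi / 4) :=
      Real.cos_le_cos_of_nonneg_of_le_pi (by positivity) (by linarith [hθ.2]) hθ.1
    rw [Real.cos_pi_div_four] at hcos
    linarith

lemma le_volumeReal_cos_window {ω r : ℝ} (hω : 0 < ω) (hr : 2 * Real.pi / ω ≤ r) (φ a : ℝ) :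
    r / 48 ≤
      volume.real ({s | Real.cos (ω * s + φ) ∈ Icc (1 / 2) (3 / 4)} ∩ Ioc a (a + r)) := by
  set P : Set ℝ := {s | Real.cos (ω * s + φ) ∈ Icc (1 / 2) (3 / 4)}
  have hP : MeasurableSet P := measurableSet_preimage (by fun_prop) measurableSet_Icc
  have hper : Function.Periodic (· ∈ P) (2 * Real.pi / ω) := fun s => by
    have : ω * (s + 2 * Real.pi / ω) + φ = ω * s + φ + 2 * Real.pi := by field_simp; ring
    simp only [P, mem_ofPred_eq, this, Real.cos_add_two_pi]
  have hsub : Icc ((Real.pi / 4 - φ) / ω) ((Real.pi / 3 - φ) / ω) ⊆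
      P ∩ Ioc (-φ / ω) (-φ / ω + 2 * Real.pi / ω) := by
    rintro s ⟨h1, h2⟩
    have hpi := Real.pi_pos
    rw [div_le_iff₀ hω] at h1
    rw [le_div_iff₀ hω] at h2
    refine ⟨cos_mem_Icc_of_mem_Icc ⟨by linarith, by linarith⟩, ?_, ?_⟩
    · rw [div_lt_iff₀ hω]; linarith
    · rw [← add_div, le_div_iff₀ hω]; linarith
  have hwindow : Real.pi / (12 * ω) ≤
      volume.real (P ∩ Ioc (-φ / ω) (-φ / ω + 2 * Real.pi / ω)) := by
    refine le_trans ?_ (measureReal_mono hsub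
      (measure_inter_ne_top_of_right_ne_top measure_Ioc_lt_top.ne))
    rw [Real.volume_real_Icc]
    refine le_max_of_le_left (le_of_eq ?_)
    field_simp
    ring
  calc r / 48 = r / (2 * (2 * Real.pi / ω)) * (Real.pi / (12 * ω)) := by
        have := Real.pi_ne_zero
        field
    _ ≤ r / (2 * (2 * Real.pi / ω)) *
        volume.real (P ∩ Ioc (-φ / ω) (-φ / ω + 2 * Real.pi / ω)) := by
      have : 0 ≤ r := le_trans (by positivity) hr
      gcongr
    _ ≤ volume.real (P ∩ Ioc a (a + r)) :=
      le_volumeReal_inter_Ioc_of_periodic hP hper (by positivity) hr a _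

lemma le_volumeReal_cos_window_unitInterval {ω r : ℝ} (hω : 0 < ω) (hr : 2 * Real.pi / ω ≤ r)
    (hr' : r ≤ 1 / 2) (φ : ℝ) (x : I) :
    r / 48 ≤ volume.real
      {s : I | |(s : ℝ) - x| ≤ r ∧ Real.cos (ω * s + φ) ∈ Icc (1 / 2) (3 / 4)} := by
  have hr0 : 0 < r := lt_of_lt_of_le (by positivity) hr
  obtain ⟨x0, x1⟩ := x.2
  obtain ⟨a, ha0, ha1, hxa, hax⟩ : ∃ a : ℝ, 0 ≤ a ∧ a + r ≤ 1 ∧ x - r ≤ a ∧ a ≤ x := by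
    rcases le_total (x : ℝ) (1 / 2) with h | h
    · exact ⟨x, x0, by linarith, by linarith, le_rfl⟩
    · exact ⟨x - r, by linarith, by linarith, le_rfl, by linarith⟩
  refine (le_volumeReal_cos_window hω hr φ a).trans ?_
  rw [measureReal_def, measureReal_def, volume_apply]
  refine ENNReal.toReal_mono (by rw [← volume_apply]; finiteness) (measure_mono ?_)
  rintro s ⟨hs, has, hsa⟩
  refine ⟨⟨s, by linarith, by linarith⟩, ⟨abs_le.2 ⟨?_, ?_⟩, hs⟩, rfl⟩ <;> simp only <;> linarith

end CosineWindows

/-- Around every point, `g` drops by at least `c` over a distance at most `d`: either from some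
point to the left, or to some point on the right. -/
def DropsWithin (g : C(I, I)) (d c : ℝ) : Prop :=
  ∀ x : I, (∃ t : I, (t : ℝ) < x ∧ (x : ℝ) - t ≤ d ∧ c ≤ (g t : ℝ) - g x) ∨
    ∃ t : I, (x : ℝ) < t ∧ (t : ℝ) - x ≤ d ∧ c ≤ (g x : ℝ) - g t

namespace DropsWithin

variable {g h : C(I, I)} {c d : ℝ}

lemma mono {d' : ℝ} (hg : DropsWithin g d c) (hd : d ≤ d') : DropsWithin g d' c := fun x =>
  (hg x).imp (fun ⟨t, ht, htd, htc⟩ => ⟨t, ht, htd.trans hd, htc⟩)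
    fun ⟨t, ht, htd, htc⟩ => ⟨t, ht, htd.trans hd, htc⟩

lemma of_dist_le {η : ℝ} (hg : DropsWithin g d c) (hη : dist g h ≤ η) :
    DropsWithin h d (c - 2 * η) := by
  have hclose : ∀ s, |(g s : ℝ) - h s| ≤ η := fun s =>
    (ContinuousMap.dist_apply_le_dist s).trans hη
  intro x
  have hx := abs_le.1 (hclose x)
  refine (hg x).imp (fun ⟨t, ht, htd, htc⟩ => ⟨t, ht, htd, ?_⟩)
    fun ⟨t, ht, htd, htc⟩ => ⟨t, ht, htd, ?_⟩ <;>
  linarith [(abs_le.1 (hclose t)).1, (abs_le.1 (hclose t)).2]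

lemma not_increasing_sub_mul {K δ γ : ℝ} (hg : DropsWithin g d c) (hdδ : d < δ)
    (hKd : |K| * d < c) (hγ : -K ≤ γ) (x : I)
    (hl : ∀ t : I, (x : ℝ) - δ < t → (t : ℝ) < x → (g t : ℝ) - γ * t ≤ g x - γ * x)
    (hr : ∀ t : I, (x : ℝ) < t → (t : ℝ) < x + δ → (g x : ℝ) - γ * x ≤ g t - γ * t) : False := by
  have slope : ∀ {ℓ : ℝ}, 0 < ℓ → ℓ ≤ d → -γ * ℓ < c := fun {ℓ} hℓ hℓd => calc
    -γ * ℓ ≤ |K| * ℓ := by gcongr; linarith [le_abs_self K]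
    _ ≤ |K| * d := by gcongr
    _ < c := hKd
  rcases hg x with ⟨t, ht, htd, htc⟩ | ⟨t, ht, htd, htc⟩
  · linarith [hl t (by linarith) ht, slope (sub_pos.2 ht) htd]
  · linarith [hr t ht (by linarith), slope (sub_pos.2 ht) htd]

end DropsWithin

section CosinePerturbation

variable {N : ℕ}

lemma exists_le_cos_eq_one (hN : 0 < N) (x : I) :
    ∃ t : I, t ≤ x ∧ (x : ℝ) - t ≤ 2 / N ∧ Real.cos (N * Real.pi * t) = 1 := by
  have hN' : (0 : ℝ) < N := by exact_mod_cast hN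
  obtain ⟨x0, x1⟩ := x.2
  set j : ℕ := ⌊N * (x : ℝ) / 2⌋₊
  have hj : j ≤ N * (x : ℝ) / 2 := Nat.floor_le (by positivity)
  have hj' : N * (x : ℝ) / 2 < (j : ℝ) + 1 := Nat.lt_floor_add_one _
  have hle : 2 * (j : ℝ) / N ≤ x := by rw [div_le_iff₀ hN']; linarith
  refine ⟨⟨2 * (j : ℝ) / N, by positivity, hle.trans x1⟩, hle, ?_, ?_⟩
  · rw [sub_le_iff_le_add, ← add_div, le_div_iff₀ hN']
    linarith
  · have hangle : N * Real.pi * (2 * (j : ℝ) / N) = j * (2 * Real.pi) := by field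
    exact (congrArg Real.cos hangle).trans (Real.cos_nat_mul_two_pi j)

lemma exists_ge_cos_eq_neg_one (hN : Odd N) (x : I) :
    ∃ t : I, x ≤ t ∧ (t : ℝ) - x ≤ 2 / N ∧ Real.cos (N * Real.pi * t) = -1 := by
  obtain ⟨t, ht, htd, hcos⟩ := exists_le_cos_eq_one hN.pos (σ x)
  refine ⟨σ t, le_symm_comm.1 ht, ?_, ?_⟩
  · rw [coe_symm_eq] at htd ⊢
    linarith
  · rw [coe_symm_eq, mul_sub, mul_one, Real.cos_nat_mul_pi_sub, hN.neg_one_pow, hcos, mul_one]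

/-- The perturbation `Q + ε cos (N π ·)` of `Q` by a cosine of small amplitude `ε` and high
frequency, which creates the drops. -/
noncomputable def cosPerturb (Q : C(I, ℝ)) (ε : ℝ) (N : ℕ) : C(I, ℝ) where
  toFun s := Q s + ε * Real.cos (N * Real.pi * s)

variable {Q : C(I, ℝ)} {ε r : ℝ}

lemma cosPerturb_apply (s : I) : cosPerturb Q ε N s = Q s + ε * Real.cos (N * Real.pi * s) :=
  rfl

lemma abs_cosPerturb_sub_le (hε : 0 ≤ ε) (s : I) : |cosPerturb Q ε N s - Q s| ≤ ε := by
  rw [cosPerturb_apply, add_sub_cancel_left, abs_mul, abs_of_nonneg hε]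
  exact mul_le_of_le_one_right hε (Real.abs_cos_le_one _)

lemma le_cdf_cosPerturb_sub_of_peak (hε : 0 < ε) (hN : 0 < N) (hNr : 2 / N ≤ r) (hr : r ≤ 1 / 2)
    (hQ : ∀ a b : I, |(a : ℝ) - b| ≤ r → |Q a - Q b| ≤ ε / 16) {x t : I} (htx : |(t : ℝ) - x| ≤ r)
    (hx : Real.cos (N * Real.pi * x) ≤ 0) (ht : Real.cos (N * Real.pi * t) = 1) :
    r / 48 ≤ cdf (volume.map (cosPerturb Q ε N)) (cosPerturb Q ε N t) -
      cdf (volume.map (cosPerturb Q ε N)) (cosPerturb Q ε N x) := by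
  have hQt := abs_le.1 (hQ t x htx)
  have hux : cosPerturb Q ε N x ≤ Q x := by rw [cosPerturb_apply]; nlinarith
  have hut : cosPerturb Q ε N t = Q t + ε := by rw [cosPerturb_apply, ht, mul_one]
  refine (le_volumeReal_cos_window_unitInterval (ω := N * Real.pi) (by positivity)
    (by rwa [mul_div_mul_right _ _ Real.pi_ne_zero]) hr 0 x).trans
    (measureReal_le_cdf_map_sub (cosPerturb Q ε N).continuous.measurable (by linarith) ?_)
  -- where `cos` lies in `[1/2, 3/4]`, the perturbation lies between its values at `x` and at `t`
  rintro s ⟨hs, hlo, hhi⟩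
  rw [add_zero] at hlo hhi
  have hQs := abs_le.1 (hQ s x hs)
  rw [hut, cosPerturb_apply s]
  constructor <;> nlinarith

lemma le_cdf_cosPerturb_sub_of_trough (hε : 0 < ε) (hN : 0 < N) (hNr : 2 / N ≤ r) (hr : r ≤ 1 / 2)
    (hQ : ∀ a b : I, |(a : ℝ) - b| ≤ r → |Q a - Q b| ≤ ε / 16) {x t : I} (htx : |(t : ℝ) - x| ≤ r)
    (hx : 0 ≤ Real.cos (N * Real.pi * x)) (ht : Real.cos (N * Real.pi * t) = -1) :
    r / 48 ≤ cdf (volume.map (cosPerturb Q ε N)) (cosPerturb Q ε N x) -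
      cdf (volume.map (cosPerturb Q ε N)) (cosPerturb Q ε N t) := by
  have hQt := abs_le.1 (hQ t x htx)
  have hux : Q x ≤ cosPerturb Q ε N x := by rw [cosPerturb_apply]; nlinarith
  have hut : cosPerturb Q ε N t = Q t - ε := by rw [cosPerturb_apply, ht]; ring
  refine (le_volumeReal_cos_window_unitInterval (ω := N * Real.pi) (by positivity)
    (by rwa [mul_div_mul_right _ _ Real.pi_ne_zero]) hr Real.pi x).trans
    (measureReal_le_cdf_map_sub (cosPerturb Q ε N).continuous.measurable (by linarith) ?_)
  rintro s ⟨hs, hlo, hhi⟩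
  rw [Real.cos_add_pi] at hlo hhi
  have hQs := abs_le.1 (hQ s x hs)
  rw [hut, cosPerturb_apply s]
  constructor <;> nlinarith

lemma dropsWithin_equalize_cosPerturb (hε : 0 < ε) (hN : Odd N) (hNr : 2 / N ≤ r) (hr : r ≤ 1 / 2)
    (hQ : ∀ a b : I, |(a : ℝ) - b| ≤ r → |Q a - Q b| ≤ ε / 16)
    [NullSingletonClass (volume.map (cosPerturb Q ε N))] :
    DropsWithin (equalize (cosPerturb Q ε N)).1 (2 / N) (r / 48) := by
  intro x
  simp only [coe_equalize_apply]
  rcases le_total (Real.cos (N * Real.pi * x)) 0 with hx | hx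
  · obtain ⟨t, ht, htd, hcos⟩ := exists_le_cos_eq_one hN.pos x
    have hne : t ≠ x := by rintro rfl; linarith
    refine Or.inl ⟨t, (lt_of_le_of_ne ht hne : _ < _), htd,
      le_cdf_cosPerturb_sub_of_peak hε hN.pos hNr hr hQ ?_ hx hcos⟩
    rw [abs_sub_comm, abs_of_nonneg (sub_nonneg.2 (Subtype.coe_le_coe.2 ht))]
    exact htd.trans hNr
  · obtain ⟨t, ht, htd, hcos⟩ := exists_ge_cos_eq_neg_one hN x
    have hne : x ≠ t := by rintro rfl; linarith
    refine Or.inr ⟨t, (lt_of_le_of_ne ht hne : _ < _), htd,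
      le_cdf_cosPerturb_sub_of_trough hε hN.pos hNr hr hQ ?_ hx hcos⟩
    rw [abs_of_nonneg (sub_nonneg.2 (Subtype.coe_le_coe.2 ht))]
    exact htd.trans hNr

open Polynomial in
lemma nullSingletonClass_map_cosPerturb_polynomial {q : ℝ[X]} (hε : 0 < ε) (hN : Odd N)
    (hNr : 2 / N ≤ r)
    (hQ : ∀ a b : I, |(a : ℝ) - b| ≤ r →
      |q.toContinuousMapOn I a - q.toContinuousMapOn I b| ≤ ε / 16) :
    NullSingletonClass ((volume : Measure I).map (cosPerturb (q.toContinuousMapOn I) ε N)) := by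
  have han : AnalyticOnNhd ℝ (fun s => q.eval s + ε * Real.cos (N * Real.pi * s)) univ :=
    fun s _ => (AnalyticOnNhd.eval_polynomial q s trivial).add
      (analyticAt_const.mul (Real.analyticAt_cos.fun_comp (analyticAt_const.mul analyticAt_id)))
  obtain ⟨t, ht, htd, hcos⟩ := exists_ge_cos_eq_neg_one hN 0
  refine nullSingletonClass_map_of_analytic han (fun s => rfl) (a := 0) (b := t) fun h => ?_
  have hQt := abs_le.1 (hQ 0 t (by
    rw [abs_sub_comm, abs_of_nonneg (sub_nonneg.2 (Subtype.coe_le_coe.2 ht))]; exact htd.trans hNr))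
  rw [cosPerturb_apply, cosPerturb_apply, hcos] at h
  simp only [Icc.coe_zero, mul_zero, Real.cos_zero] at h
  linarith

lemma exists_forall_abs_sub_le (Q : C(I, ℝ)) {η : ℝ} (hη : 0 < η) :
    ∃ r, 0 < r ∧ r ≤ 1 / 2 ∧ ∀ a b : I, |(a : ℝ) - b| ≤ r → |Q a - Q b| ≤ η := by
  obtain ⟨r, hr, hQ⟩ := Metric.uniformContinuous_iff_le.1
    (CompactSpace.uniformContinuous_of_continuous Q.continuous) η hη
  exact ⟨min r (1 / 2), by positivity, min_le_right _ _,
    fun a b hab => hQ (hab.trans (min_le_left _ _))⟩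

lemma exists_odd_two_div_le {d : ℝ} (hd : 0 < d) : ∃ N : ℕ, Odd N ∧ 2 / (N : ℝ) ≤ d := by
  obtain ⟨M, hM⟩ := exists_nat_ge (1 / d)
  refine ⟨2 * M + 1, odd_two_mul_add_one M, ?_⟩
  rw [div_le_iff₀ hd] at hM
  rw [div_le_iff₀ (by positivity)]
  push_cast
  linarith

theorem exists_dropsWithin_dist_lt (f : CLam) {ε : ℝ} (hε : 0 < ε) :
    ∃ c > 0, ∀ d > 0, ∃ g : CLam, dist g f < ε ∧ DropsWithin g.1 d c := by
  obtain ⟨q, hq⟩ := exists_polynomial_near_continuousMap 0 1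
    ((⟨Subtype.val, continuous_subtype_val⟩ : C(I, ℝ)).comp f.1) (ε / 8) (by positivity)
  set Q : C(I, ℝ) := q.toContinuousMapOn I
  have hQf : ∀ s, |Q s - f.1 s| ≤ ε / 8 := fun s =>
    (ContinuousMap.norm_coe_le_norm _ s).trans hq.le
  obtain ⟨r, hr0, hr, hQ⟩ := exists_forall_abs_sub_le Q (show 0 < ε / 8 / 16 by positivity)
  refine ⟨r / 48, by positivity, fun d hd => ?_⟩
  obtain ⟨N, hN, hNd⟩ := exists_odd_two_div_le (lt_min hd hr0)
  have hNr : 2 / (N : ℝ) ≤ r := hNd.trans (min_le_right _ _)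
  have hε8 : 0 < ε / 8 := by positivity
  have := nullSingletonClass_map_cosPerturb_polynomial hε8 hN hNr hQ
  refine ⟨equalize (cosPerturb Q (ε / 8) N), ?_,
    (dropsWithin_equalize_cosPerturb hε8 hN hNr hr hQ).mono (hNd.trans (min_le_left _ _))⟩
  have hclose : ∀ s, |cosPerturb Q (ε / 8) N s - f.1 s| ≤ ε / 8 + ε / 8 := fun s =>
    (abs_sub_le _ (Q s) _).trans (add_le_add (abs_cosPerturb_sub_le hε8.le s) (hQf s))
  linarith [dist_equalize_le hclose]

end CosinePerturbation

theorem stmt11_general (K : ℝ) {δ : ℝ} (hδ : 0 < δ) :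
    IsNowhereDense {f : CLam |
      ∃ γ ∈ Set.Ici (-K), ∃ x : unitInterval,
        (∀ t : unitInterval, (x : ℝ) - δ < (t : ℝ) → (t : ℝ) < (x : ℝ) →
          (f.1 t : ℝ) - γ * (t : ℝ) ≤ (f.1 x : ℝ) - γ * (x : ℝ)) ∧
        (∀ t : unitInterval, (x : ℝ) < (t : ℝ) → (t : ℝ) < (x : ℝ) + δ →
          (f.1 x : ℝ) - γ * (x : ℝ) ≤ (f.1 t : ℝ) - γ * (t : ℝ))} := by
  refine isNowhereDense_iff_forall_notMem_nhds.2 fun f _ hf => ?_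
  obtain ⟨ε, hε, hball⟩ := Metric.mem_nhds_iff.1 hf
  obtain ⟨c, hc, hdrops⟩ := exists_dropsWithin_dist_lt f hε
  obtain ⟨d, hdδ, hKd, hd⟩ : ∃ d, d < δ ∧ |K| * d < c / 2 ∧ 0 < d := by
    have hlim : Tendsto (fun d => |K| * d) (𝓝[>] 0) (𝓝 0) :=
      ((continuous_const_mul |K|).tendsto' 0 0 (mul_zero _)).mono_left nhdsWithin_le_nhds
    exact (((tendsto_nhdsWithin_of_tendsto_nhds tendsto_id).eventually_lt_const hδ).and
      ((hlim.eventually_lt_const (half_pos hc)).and self_mem_nhdsWithin)).exists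
  obtain ⟨g, hgf, hg⟩ := hdrops d hd
  obtain ⟨h, ⟨γ, hγ, x, hl, hr⟩, hgh⟩ :=
    Metric.mem_closure_iff.1 (hball (Metric.mem_ball.2 hgf)) (c / 4) (by positivity)
  have hh : DropsWithin h.1 d (c - 2 * (c / 4)) := hg.of_dist_le hgh.le
  exact hh.not_increasing_sub_mul hdδ (by linarith) hγ x hl hr

/-- For every `n ≥ 1`, the set `A_n` of all `f ∈ C_λ` for which there exist
`γ ∈ [−n, n]` and `x ∈ [0,1]` with `f(t) − γt ≤ f(x) − γx` for all
`t ∈ [0,1] ∩ (x − 1/n, x)` and `f(t) − γt ≥ f(x) − γx` for all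
`t ∈ [0,1] ∩ (x, x + 1/n)`, is nowhere dense in `C_λ` (uniform metric). -/
theorem stmt11 (n : ℕ) (hn : 1 ≤ n) :
    IsNowhereDense {f : CLam |
      ∃ γ ∈ Set.Icc (-(n : ℝ)) (n : ℝ), ∃ x : unitInterval,
        (∀ t : unitInterval, (x : ℝ) - 1 / (n : ℝ) < (t : ℝ) → (t : ℝ) < (x : ℝ) →
          (f.1 t : ℝ) - γ * (t : ℝ) ≤ (f.1 x : ℝ) - γ * (x : ℝ)) ∧
        (∀ t : unitInterval, (x : ℝ) < (t : ℝ) → (t : ℝ) < (x : ℝ) + 1 / (n : ℝ) →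
          (f.1 x : ℝ) - γ * (x : ℝ) ≤ (f.1 t : ℝ) - γ * (t : ℝ))} := by
  have hδ : (0 : ℝ) < 1 / n := one_div_pos.2 (by exact_mod_cast hn)
  refine (stmt11_general n hδ).mono ?_
  exact fun _ ⟨γ, hγ, h⟩ => ⟨γ, hγ.1, h⟩
end
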